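/- Let q be a prime power with q > 2 and let S be an algebraic hypersurface of PG(6,q^2) of degree q+1 defined over GF(q^2), not containing any solid, with exactly q^11 + q^9 + q^7 + q^4 + q^2 + 1 rational points, and let Sigma_3 be a solid with |S ∩ Sigma_3| = q^4 + q^2 + 1. Then every 4-dimensional projective subspace Sigma_4 of PG(6,q^2) containing Sigma_3 meets S in a Hermitian cone with vertex a line and base a non-singular Hermitian curve; in particular |S ∩ Sigma_4| = q^7 + q^4 + q^2 + 1. -/

import Mathlib

open MvPolynomial Module

/-- The set of points of the projective subspace of `PG(n-1, F)` determined by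
the linear subspace `W` of `F^n`. -/
def projPts {F : Type} [Field F] {n : ℕ} (W : Submodule F (Fin n → F)) :
    Set (Projectivization F (Fin n → F)) :=
  {P | P.submodule ≤ W}

/-- The set of `F`-rational points of the hypersurface of `PG(n-1, F)` defined by the
homogeneous polynomial `f`. -/
def hypersurfacePts {F : Type} [Field F] {n : ℕ} (f : MvPolynomial (Fin n) F) :
    Set (Projectivization F (Fin n → F)) :=
  {P | MvPolynomial.eval P.rep f = 0}


/-- `η` is a Hermitian (sesquilinear) form with respect to the involution `x ↦ x^q`:
additive in each argument, `F`-linear in the first, with `η w v = (η v w)^q`. -/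
def IsHermitianForm (q : ℕ) {F : Type} [Field F] {V : Type} [AddCommGroup V] [Module F V]
    (η : V → V → F) : Prop :=
  (∀ u v w, η (u + v) w = η u w + η v w) ∧
  (∀ u v w, η u (v + w) = η u v + η u w) ∧
  (∀ (a : F) (v w : V), η (a • v) w = a * η v w) ∧
  (∀ v w, η w v = (η v w) ^ q)

/-- The radical of the form `η` restricted to the subspace `W` has dimension `k`. -/
def HasRadicalDimOn {F : Type} [Field F] {n : ℕ}
    (η : (Fin n → F) → (Fin n → F) → F) (W : Submodule F (Fin n → F)) (k : ℕ) : Prop :=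
  ∃ R : Submodule F (Fin n → F), R ≤ W ∧ Module.finrank F R = k ∧
    ∀ v ∈ W, (v ∈ R ↔ ∀ w ∈ W, η v w = 0)

/-- `X` is the Hermitian variety of the projective subspace determined by `W` cut out by a
Hermitian form whose radical on `W` has dimension `k` (a non-singular Hermitian variety
if `k = 0`, a Hermitian cone with vertex of projective dimension `k - 1` otherwise). -/
def IsHermitianConeOn (q : ℕ) {F : Type} [Field F] {n : ℕ}
    (W : Submodule F (Fin n → F)) (k : ℕ)
    (X : Set (Projectivization F (Fin n → F))) : Prop :=
  ∃ η : (Fin n → F) → (Fin n → F) → F, IsHermitianForm q η ∧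
    HasRadicalDimOn η W k ∧
    X = {P | P.submodule ≤ W ∧ η P.rep P.rep = 0}


theorem hom_eval_smul {F : Type} [Field F] {σ : Type} {n : ℕ} {f : MvPolynomial σ F}
    (hf : f.IsHomogeneous n) (c : F) (v : σ → F) : eval (c • v) f = c ^ n * eval v f := by
  rw [eval_eq, eval_eq, Finset.mul_sum]
  refine Finset.sum_congr rfl fun d hd => ?_
  have h1 : ∑ i ∈ d.support, d i = n := by
    have := hf (mem_support_iff.mp hd)
    simpa [Finsupp.weight_apply, Finsupp.sum] using this
  simp only [Pi.smul_apply, smul_eq_mul, mul_pow, Finset.prod_mul_distrib]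
  rw [Finset.prod_pow_eq_pow_sum, h1]; ring

/-- restriction to a line -/
noncomputable def lineR {F : Type} [Field F] {σ : Type} (A B : σ → F) (U : MvPolynomial σ F) :
    Polynomial F := aeval (fun i => Polynomial.C (A i) + Polynomial.C (B i) * Polynomial.X) U

theorem lineR_deg {F : Type} [Field F] {σ : Type} (A B : σ → F) (U : MvPolynomial σ F) :
    (lineR A B U).natDegree ≤ U.totalDegree := by
  have := aeval_natDegree_le U le_rfl (fun i => Polynomial.C (A i) + Polynomial.C (B i) * Polynomial.X)
    (n := 1) (fun i => by compute_degree)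
  simpa [lineR] using this

theorem lineR_eval {F : Type} [Field F] {σ : Type} (A B : σ → F) (U : MvPolynomial σ F) (t : F) :
    (lineR A B U).eval t = eval (A + t • B) U := by
  rw [lineR, ← Polynomial.coe_evalRingHom]
  have : ((Polynomial.evalRingHom t).comp (aeval (fun i => Polynomial.C (A i) + Polynomial.C (B i) * Polynomial.X) : MvPolynomial σ F →ₐ[F] Polynomial F).toRingHom) = eval (A + t • B) := by
    ext i
    · simp
    · simp; ring
  exact congrArg (fun g : MvPolynomial σ F →+* F => g U) this

theorem poly_zero_of_eval_ne {F : Type} [Field F] [Fintype F] (p : Polynomial F) (h : ∀ x, x ≠ 0 → p.eval x = 0)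
    (hd : p.natDegree + 1 < Fintype.card F) : p = 0 := by
  classical
  apply Polynomial.eq_zero_of_natDegree_lt_card_of_eval_eq_zero' p (Finset.univ.erase 0)
  · intro i hi; exact h i (Finset.ne_of_mem_erase hi)
  · rw [Finset.card_erase_of_mem (Finset.mem_univ _), Finset.card_univ]; omega

theorem lineR_ne {F : Type} [Field F] [Fintype F] {σ : Type} {n : ℕ} {f : MvPolynomial σ F}
    (hf : f.IsHomogeneous n) (hn : n + 1 < Fintype.card F) (A B : σ → F) (hB : eval B f ≠ 0) :
    lineR A B f ≠ 0 := by
  intro h0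
  have h1 : lineR B A f = 0 := by
    apply poly_zero_of_eval_ne
    · intro x hx
      rw [lineR_eval]
      have : B + x • A = x • (A + x⁻¹ • B) := by
        rw [smul_add, smul_smul, mul_inv_cancel₀ hx, one_smul, add_comm]
      rw [this, hom_eval_smul hf, ← lineR_eval, h0]; simp
    · have := lineR_deg B A f
      have := hf.totalDegree_le
      omega
  apply hB
  have := lineR_eval B A f 0
  rw [h1] at this
  simpa using this.symm



theorem count_bound {F : Type} [Field F] [Fintype F] [DecidableEq F] (U : MvPolynomial (Fin 3) F) (e : ℕ) (he : 1 ≤ e)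
    (hU : U.totalDegree ≤ e)
    (hne : ∀ y w : F × F, w ≠ 0 → lineR ![1, y.1, y.2] ![0, w.1, w.2] U ≠ 0) :
    (Finset.univ.filter fun y : F × F => eval ![1, y.1, y.2] U = 0).card
      ≤ 1 + (Fintype.card F + 1) * (e - 1) := by
  set Z := Finset.univ.filter fun y : F × F => eval ![1, y.1, y.2] U = 0 with hZ
  rcases Z.eq_empty_or_nonempty with h | ⟨P, hP⟩
  · simp [h]
  have hdc := Finset.sum_card_bipartiteAbove_eq_sum_card_bipartiteBelow
    (s := (Finset.univ : Finset F).erase 0) (t := (Finset.univ : Finset (F × F)).erase 0)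
    (fun t w => P + t • w ∈ Z)
  have hl : ∀ t ∈ (Finset.univ : Finset F).erase 0,
      (Finset.bipartiteAbove (fun t w => P + t • w ∈ Z) ((Finset.univ : Finset (F × F)).erase 0) t).card = Z.card - 1 := by
    intro t ht
    have ht0 : t ≠ 0 := Finset.ne_of_mem_erase ht
    rw [← Finset.card_erase_of_mem hP]
    apply Finset.card_bij (fun w _ => P + t • w)
    · intro w hw
      simp only [Finset.bipartiteAbove, Finset.mem_filter, Finset.mem_erase] at hw ⊢
      refine ⟨?_, hw.2⟩
      simpa [ht0] using hw.1.1
    · intro w _ w' _ h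
      exact (smul_right_injective _ ht0) (add_left_cancel h)
    · intro b hb
      simp only [Finset.mem_erase] at hb
      have hb2 : P + t • (t⁻¹ • (b - P)) = b := by
        rw [smul_smul, mul_inv_cancel₀ ht0, one_smul]; abel
      refine ⟨t⁻¹ • (b - P), ?_, hb2⟩
      simp only [Finset.bipartiteAbove, Finset.mem_filter, Finset.mem_erase, Finset.mem_univ, and_true]
      refine ⟨?_, hb2.symm ▸ hb.2⟩
      exact smul_ne_zero (inv_ne_zero ht0) (sub_ne_zero.mpr hb.1)
  have hr : ∀ w ∈ (Finset.univ : Finset (F × F)).erase 0,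
      (Finset.bipartiteBelow (fun t w => P + t • w ∈ Z) ((Finset.univ : Finset F).erase 0) w).card ≤ e - 1 := by
    intro w hw
    have hw0 := Finset.ne_of_mem_erase hw
    have hpoly := hne P w hw0
    set p := lineR ![1, P.1, P.2] ![0, w.1, w.2] U with hp
    have hroots : insert 0 (Finset.bipartiteBelow (fun t w => P + t • w ∈ Z) ((Finset.univ : Finset F).erase 0) w)
        ⊆ p.roots.toFinset := by
      intro t ht
      have key : P + t • w ∈ Z := by
        rw [Finset.mem_insert] at ht
        rcases ht with rfl | ht
        · simpa using hP
        · exact (Finset.mem_filter.mp ht).2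
      rw [Multiset.mem_toFinset, Polynomial.mem_roots hpoly, Polynomial.IsRoot, hp, lineR_eval]
      have := (Finset.mem_filter.mp key).2
      convert this using 3
      ext i; fin_cases i <;> simp
    have h1 := Finset.card_le_card hroots
    rw [Finset.card_insert_of_notMem (by simp [Finset.bipartiteBelow])] at h1
    have h2 : p.roots.toFinset.card ≤ p.natDegree := (Multiset.toFinset_card_le _).trans (Polynomial.card_roots' p)
    have h2b := lineR_deg ![1, P.1, P.2] ![0, w.1, w.2] U
    rw [← hp] at h2b
    omega
  rw [Finset.sum_congr rfl hl, Finset.sum_const] at hdc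
  have h3 := Finset.sum_le_sum hr
  rw [← hdc, Finset.sum_const, Finset.card_erase_of_mem (Finset.mem_univ _), Finset.card_erase_of_mem (Finset.mem_univ _),
    Finset.card_univ, Finset.card_univ, Fintype.card_prod, smul_eq_mul, smul_eq_mul] at h3
  have hQ : 2 ≤ Fintype.card F := Fintype.one_lt_card
  obtain ⟨m, hm⟩ : ∃ m, Fintype.card F = m + 2 := ⟨_, (Nat.sub_add_cancel hQ).symm⟩
  rw [hm] at h3 ⊢
  have h4 : (m + 2) * (m + 2) - 1 = (m + 1) * (m + 3) := by
    have : (m + 2) * (m + 2) = (m + 1) * (m + 3) + 1 := by ring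
    omega
  rw [h4, mul_assoc] at h3
  have h5 := Nat.le_of_mul_le_mul_left h3 (by omega)
  have : (m + 2 + 1) = m + 3 := rfl
  rw [this]
  omega


theorem isUnit_of_totalDegree_zero {F σ : Type} [Field F] {U : MvPolynomial σ F} (h0 : U ≠ 0) (h : U.totalDegree = 0) :
    IsUnit U := by
  rw [totalDegree_eq_zero_iff_eq_C] at h
  rw [h] at h0 ⊢
  apply IsUnit.map
  rw [isUnit_iff_ne_zero]
  intro h'; apply h0; rw [h']; simp

theorem plane_irred {F : Type} [Field F] [Fintype F] [DecidableEq F] (q : ℕ) (hq : 2 < q) (hF : Fintype.card F = q ^ 2)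
    (f : MvPolynomial (Fin 3) F) (hf : f.IsHomogeneous (q + 1))
    (hne : ∀ w : F × F, w ≠ 0 → eval ![0, w.1, w.2] f ≠ 0)
    (hN : q ^ 3 ≤ (Finset.univ.filter fun y : F × F => eval ![1, y.1, y.2] f = 0).card) :
    Irreducible f := by
  have hq1 : q + 1 + 1 < Fintype.card F := by rw [hF]; nlinarith
  have hl : ∀ y w : F × F, w ≠ 0 → lineR ![1, y.1, y.2] ![0, w.1, w.2] f ≠ 0 :=
    fun y w hw => lineR_ne hf hq1 _ _ (hne w hw)
  have hf0 : f ≠ 0 := by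
    rintro rfl
    exact hne (1, 0) (by simp) (by simp)
  have hdeg := hf.totalDegree hf0
  refine ⟨fun hu => ?_, fun U V hUV => ?_⟩
  · have := MvPolynomial.isUnit_iff_totalDegree_of_isReduced.mp hu
    omega
  · by_contra hcon
    push Not at hcon
    subst hUV
    have hU0 : U ≠ 0 := left_ne_zero_of_mul hf0
    have hV0 : V ≠ 0 := right_ne_zero_of_mul hf0
    have hU1 : 1 ≤ U.totalDegree := Nat.one_le_iff_ne_zero.mpr fun h => hcon.1 (isUnit_of_totalDegree_zero hU0 h)
    have hV1 : 1 ≤ V.totalDegree := Nat.one_le_iff_ne_zero.mpr fun h => hcon.2 (isUnit_of_totalDegree_zero hV0 h)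
    rw [totalDegree_mul_of_isDomain hU0 hV0] at hdeg
    have hm : ∀ A B : Fin 3 → F, lineR A B (U * V) = lineR A B U * lineR A B V := fun A B => by simp [lineR]
    have cU := count_bound U _ hU1 le_rfl fun y w hw => left_ne_zero_of_mul (hm _ _ ▸ hl y w hw)
    have cV := count_bound V _ hV1 le_rfl fun y w hw => right_ne_zero_of_mul (hm _ _ ▸ hl y w hw)
    have hsub : (Finset.univ.filter fun y : F × F => eval ![1, y.1, y.2] (U * V) = 0) ⊆
        (Finset.univ.filter fun y : F × F => eval ![1, y.1, y.2] U = 0) ∪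
        (Finset.univ.filter fun y : F × F => eval ![1, y.1, y.2] V = 0) := by
      intro y hy
      simpa [Finset.mem_filter] using hy
    have h1 := (Finset.card_le_card hsub).trans (Finset.card_union_le _ _)
    obtain ⟨a, ha⟩ := Nat.exists_eq_add_of_le hU1
    obtain ⟨b, hb⟩ := Nat.exists_eq_add_of_le hV1
    rw [hF] at cU cV
    rw [ha] at cU hdeg
    rw [hb] at cV hdeg
    have hq' : q = a + b + 1 := by omega
    simp only [Nat.add_sub_cancel_left] at cU cV
    have : q ^ 3 ≤ 2 + (q ^ 2 + 1) * (a + b) := by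
      calc q ^ 3 ≤ _ := hN.trans h1
        _ ≤ _ := Nat.add_le_add cU cV
        _ = _ := by ring
    have h2 : a + b + 1 = q := hq'.symm
    have h3 : (q ^ 2 + 1) * (a + b) + (q ^ 2 + 1) = (q ^ 2 + 1) * q := by rw [← h2]; ring
    nlinarith


theorem lineR_reflect {F : Type} [Field F] [Fintype F] {σ : Type} {n : ℕ} {f : MvPolynomial σ F}
    (hf : f.IsHomogeneous n) (hn : n + 1 < Fintype.card F) (A B : σ → F) :
    (lineR A B f).reflect n = lineR B A f := by
  have hd : ∀ A B, (lineR A B f).natDegree ≤ n := fun A B => (lineR_deg A B f).trans hf.totalDegree_le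
  rw [← sub_eq_zero]
  apply poly_zero_of_eval_ne
  · intro x hx
    have hx' : x⁻¹ ≠ 0 := inv_ne_zero hx
    let _ : Invertible x⁻¹ := invertibleOfNonzero hx'
    have h1 := Polynomial.eval₂_reflect_mul_pow (RingHom.id F) x⁻¹ n (lineR A B f) (hd A B)
    rw [invOf_eq_inv, inv_inv] at h1
    simp only [Polynomial.eval₂_id, lineR_eval] at h1
    have : B + x • A = x • (A + x⁻¹ • B) := by
      rw [smul_add, smul_smul, mul_inv_cancel₀ hx, one_smul, add_comm]
    rw [Polynomial.eval_sub, lineR_eval, this, hom_eval_smul hf, ← h1]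
    rw [mul_left_comm, ← mul_pow, mul_inv_cancel₀ hx, one_pow, mul_one, sub_self]
  · have h1 := (Polynomial.natDegree_sub_le (Polynomial.reflect n (lineR A B f)) (lineR B A f))
    have h2 := hd B A
    have h3 : (Polynomial.reflect n (lineR A B f)).natDegree ≤ n := by
      have := Polynomial.natDegree_reflect_le (p := lineR A B f) (N := n)
      have := hd A B
      omega
    omega

theorem lineR_coeff_top {F : Type} [Field F] [Fintype F] {σ : Type} {n : ℕ} {f : MvPolynomial σ F}
    (hf : f.IsHomogeneous n) (hn : n + 1 < Fintype.card F) (A B : σ → F) :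
    (lineR A B f).coeff n = eval B f := by
  rw [← lineR_reflect hf hn B A, Polynomial.coeff_reflect, Polynomial.revAt_le le_rfl, Nat.sub_self,
    Polynomial.coeff_zero_eq_eval_zero, lineR_eval]
  simp

theorem coprime_of_no_roots {F : Type} [Field F] [Fintype F] (p : Polynomial F) (h : ∀ a, p.eval a ≠ 0) :
    IsCoprime p (Polynomial.X ^ (Fintype.card F) - Polynomial.X) := by
  have h1 : (Polynomial.X ^ (Fintype.card F) - Polynomial.X : Polynomial F) = ∏ a : F, (Polynomial.X - Polynomial.C a) := by
    have hc : 1 < Fintype.card F := Fintype.one_lt_card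
    have hr := FiniteField.roots_X_pow_card_sub_X F
    have := Polynomial.prod_multiset_X_sub_C_of_monic_of_roots_card_eq
      (p := (Polynomial.X ^ (Fintype.card F) - Polynomial.X : Polynomial F))
      (by apply Polynomial.monic_X_pow_sub; simpa using hc)
      (by rw [hr, FiniteField.X_pow_card_sub_X_natDegree_eq F hc]; simp [Finset.card_univ])
    rw [hr] at this
    exact this.symm
  rw [h1]
  apply IsCoprime.prod_right
  intro a _
  refine ((Polynomial.irreducible_X_sub_C a).coprime_iff_not_dvd.mpr ?_).symm
  rw [Polynomial.dvd_iff_isRoot]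
  exact h a

/-- the `Frobenius polar` -/
noncomputable def frobG {F : Type} [Field F] [Fintype F] (f : MvPolynomial (Fin 3) F) : MvPolynomial (Fin 3) F :=
  ∑ i, X i ^ (Fintype.card F) * pderiv i f

theorem not_dvd_frobG {F : Type} [Field F] [Fintype F] [DecidableEq F] (q : ℕ) (hq : 2 < q) (hF : Fintype.card F = q ^ 2)
    (hq0 : (q : F) = 0)
    (f : MvPolynomial (Fin 3) F) (hf : f.IsHomogeneous (q + 1))
    (hne : ∀ w : F × F, w ≠ 0 → eval ![0, w.1, w.2] f ≠ 0) : ¬ f ∣ frobG f := by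
  intro hdvd
  have hq1 : q + 1 + 1 < Fintype.card F := by rw [hF]; nlinarith
  let θ : MvPolynomial (Fin 3) F →ₐ[F] Polynomial F := aeval ![0, Polynomial.X, 1]
  have hθ : ∀ p, θ p = lineR ![0, 0, 1] ![0, 1, 0] p := by
    intro p
    have : (![0, Polynomial.X, 1] : Fin 3 → Polynomial F) = (fun i => Polynomial.C ((![0, 0, 1] : Fin 3 → F) i) + Polynomial.C ((![0, 1, 0] : Fin 3 → F) i) * Polynomial.X) := by
      ext1 i; fin_cases i <;> simp
    simp only [θ, lineR, this]
  have hE : X 0 * pderiv 0 f + X 1 * pderiv 1 f + X 2 * pderiv 2 f = f := by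
    have := hf.sum_X_mul_pderiv
    rw [Fin.sum_univ_three] at this
    rw [this]
    have h2 : ((q + 1 : ℕ) : MvPolynomial (Fin 3) F) = 1 := by
      have : ((q + 1 : ℕ) : MvPolynomial (Fin 3) F) = C ((q + 1 : ℕ) : F) := by simp
      rw [this]; push_cast; rw [hq0]; simp
    rw [nsmul_eq_mul, h2, one_mul]
  have h1 : θ f = Polynomial.X * θ (pderiv 1 f) + θ (pderiv 2 f) := by
    conv_lhs => rw [← hE]
    simp [θ]
  have h2 : θ (frobG f) = (Polynomial.X ^ (Fintype.card F) - Polynomial.X) * θ (pderiv 1 f) + θ f := by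
    rw [h1, frobG, Fin.sum_univ_three]
    simp [θ]; ring
  have hd : ∀ i, (θ (pderiv i f)).natDegree ≤ q := by
    intro i; rw [hθ]
    have := (hf.pderiv (i := i)).totalDegree_le
    have := lineR_deg ![0, 0, 1] ![0, 1, 0] (pderiv i f)
    omega
  have htop : (θ f).coeff (q + 1) ≠ 0 := by
    rw [hθ, lineR_coeff_top hf hq1]
    exact hne (1, 0) (by simp)
  have hco : IsCoprime (θ f) (Polynomial.X ^ (Fintype.card F) - Polynomial.X) := by
    apply coprime_of_no_roots
    intro a
    rw [hθ, lineR_eval]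
    have := hne (a, 1) (by simp)
    convert this using 3
    ext i; fin_cases i <;> simp
  have h3 : θ f ∣ θ (pderiv 1 f) := by
    apply hco.dvd_of_dvd_mul_left
    have : θ f ∣ θ (frobG f) := map_dvd θ hdvd
    rw [h2] at this
    exact (dvd_add_left dvd_rfl).mp this
  have h4 : (θ f).natDegree ≤ q := by
    by_cases h0 : θ (pderiv 1 f) = 0
    · rw [h1, h0, mul_zero, zero_add]; exact hd 2
    · exact (Polynomial.natDegree_le_of_dvd h3 h0).trans (hd 1)
  exact htop (Polynomial.coeff_eq_zero_of_natDegree_lt (by omega))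


theorem finrank_homog (F : Type) [Field F] (n : ℕ) :
    Module.finrank F (homogeneousSubmodule (Fin 3) F n) = (n + 2).choose 2 := by
  have h1 := congrArg (fun S : Submodule F (MvPolynomial (Fin 3) F) => Module.finrank F S) (homogeneousSubmodule_eq_finsupp_supported (R := F) (σ := Fin 3) n)
  refine h1.trans ?_
  have h2 := (AddMonoidAlgebra.supportedEquivFinsupp (R := F) (S := F) {d : Fin 3 →₀ ℕ | d.degree = n}).finrank_eq
  refine h2.trans ?_
  have hs : {d : Fin 3 →₀ ℕ | d.degree = n} = (Finset.finsuppAntidiag (Finset.univ : Finset (Fin 3)) n : Set (Fin 3 →₀ ℕ)) := by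
    ext d
    simp [Finset.mem_finsuppAntidiag, Finsupp.degree_eq_sum]
  rw [hs]
  rw [Module.finrank_finsupp_self]
  have := Finset.card_finsuppAntidiag_nat_eq_choose (s := (Finset.univ : Finset (Fin 3))) (n := n)
  simp at this
  have h3 : Fintype.card (↑(Finset.finsuppAntidiag (Finset.univ : Finset (Fin 3)) n : Set (Fin 3 →₀ ℕ))) =
      (Finset.finsuppAntidiag (Finset.univ : Finset (Fin 3)) n).card := by simp
  rw [h3, this, add_comm 2 n, Nat.choose_symm_add]

instance homog_finite (F : Type) [Field F] (n : ℕ) : Module.Finite F (homogeneousSubmodule (Fin 3) F n) :=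
  Module.Finite.of_fg (homogeneousSubmodule_fg _ _ n)

theorem homog_quot {F : Type} [Field F] {f b c : MvPolynomial (Fin 3) F} {m d : ℕ} (hf : f.IsHomogeneous d)
    (hb : b.IsHomogeneous (m + d)) (h : b = f * c) : b = f * homogeneousComponent m c := by
  have h1 : homogeneousComponent (m + d) b = b := homogeneousComponent_eq_self hb
  rw [← h1, h]
  conv_lhs => rw [← sum_homogeneousComponent c, Finset.mul_sum, map_sum]
  have : ∀ i ∈ Finset.range (c.totalDegree + 1), homogeneousComponent (m + d) (f * homogeneousComponent i c)
      = if i = m then f * homogeneousComponent m c else 0 := by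
    intro i _
    have hm : f * homogeneousComponent i c ∈ homogeneousSubmodule (Fin 3) F (i + d) := by
      rw [mem_homogeneousSubmodule, add_comm]
      exact hf.mul (homogeneousComponent_isHomogeneous i c)
    rw [homogeneousComponent_of_mem hm]
    by_cases him : i = m
    · subst him; simp
    · simp [him, Ne.symm him]
  rw [Finset.sum_congr rfl this, Finset.sum_ite_eq']
  split_ifs with h2
  · rfl
  · rw [homogeneousComponent_eq_zero, mul_zero]
    simpa using h2


theorem rank_ideal {F : Type} [Field F] {f g : MvPolynomial (Fin 3) F} {m d e : ℕ} (hf : f.IsHomogeneous d)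
    (hg : g.IsHomogeneous e) (hp : Prime f) (hfg : ¬ f ∣ g) (K : Submodule F (homogeneousSubmodule (Fin 3) F (m + d + e)))
    (hK1 : ∀ p : homogeneousSubmodule (Fin 3) F (m + d + e), ∀ a, (p : MvPolynomial (Fin 3) F) = a * f → p ∈ K)
    (hK2 : ∀ p : homogeneousSubmodule (Fin 3) F (m + d + e), ∀ a, (p : MvPolynomial (Fin 3) F) = a * g → p ∈ K) :
    (m + e + 2).choose 2 + (m + d + 2).choose 2 ≤ Module.finrank F K + (m + 2).choose 2 := by
  let V := fun n => homogeneousSubmodule (Fin 3) F n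
  let Φ0 : (V (m + e) × V (m + d)) →ₗ[F] MvPolynomial (Fin 3) F :=
    ((LinearMap.mulRight F f).comp (V (m + e)).subtype).coprod ((LinearMap.mulRight F g).comp (V (m + d)).subtype)
  have hΦ0 : ∀ x, Φ0 x = x.1.1 * f + x.2.1 * g := fun x => by simp [Φ0]
  have hm1 : ∀ a : V (m + e), (a.1 * f) ∈ V (m + d + e) := by
    intro a
    have := IsHomogeneous.mul a.2 hf
    have h2 : m + e + d = m + d + e := by ring
    rw [h2] at this; exact this
  have hm2 : ∀ a : V (m + d), (a.1 * g) ∈ V (m + d + e) := fun a => IsHomogeneous.mul a.2 hg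
  let Φ := Φ0.codRestrict (V (m + d + e)) (fun x => by rw [hΦ0]; exact add_mem (hm1 _) (hm2 _))
  have hr : LinearMap.range Φ ≤ K := by
    rintro _ ⟨x, rfl⟩
    have : Φ x = ⟨_, hm1 x.1⟩ + ⟨_, hm2 x.2⟩ := by
      apply Subtype.ext; simp [Φ, hΦ0]
    rw [this]
    exact add_mem (hK1 _ _ rfl) (hK2 _ _ rfl)
  let Ψ : V m →ₗ[F] (V (m + e) × V (m + d)) :=
    LinearMap.prod (((LinearMap.mulRight F (-g)).comp (V m).subtype).codRestrict (V (m + e))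
        (fun x => IsHomogeneous.mul x.2 hg.neg))
      (((LinearMap.mulRight F f).comp (V m).subtype).codRestrict (V (m + d))
        (fun x => IsHomogeneous.mul x.2 hf))
  have hk : LinearMap.ker Φ ≤ LinearMap.range Ψ := by
    rintro ⟨⟨a, ha⟩, ⟨b, hb⟩⟩ hx
    have h0 : a * f + b * g = 0 := by
      have : (Φ (⟨a, ha⟩, ⟨b, hb⟩)).1 = 0 := by rw [LinearMap.mem_ker.mp hx]; rfl
      simpa [Φ, hΦ0] using this
    have hdvd : f ∣ b * g := ⟨-a, by linear_combination h0⟩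
    obtain ⟨c, hc⟩ := (hp.dvd_or_dvd hdvd).resolve_right hfg
    have hc' := homog_quot hf hb hc
    refine ⟨⟨homogeneousComponent m c, homogeneousComponent_mem m c⟩, ?_⟩
    apply Prod.ext
    · apply Subtype.ext
      show homogeneousComponent m c * (-g) = a
      apply mul_right_cancel₀ hp.ne_zero
      linear_combination g * hc' - h0
    · apply Subtype.ext
      show homogeneousComponent m c * f = b
      rw [mul_comm]; exact hc'.symm
  have e1 := LinearMap.finrank_range_add_finrank_ker Φ
  have e2 := LinearMap.finrank_range_add_finrank_ker Ψ
  have e3 := Submodule.finrank_mono hr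
  have e4 := Submodule.finrank_mono hk
  rw [Module.finrank_prod] at e1
  simp only [V, finrank_homog] at e1 e2 e3 e4
  omega

theorem choose_diff (m d e : ℕ) : (m + d + e + 2).choose 2 + (m + 2).choose 2 =
    (m + e + 2).choose 2 + (m + d + 2).choose 2 + d * e := by
  have key : ∀ n : ℕ, 2 * (n + 2).choose 2 = (n + 2) * (n + 1) := by
    intro n
    have := Nat.triangle_succ (n + 1)
    rw [Nat.choose_two_right]
    rw [Nat.mul_div_cancel']
    · rfl
    · exact (Nat.even_mul_pred_self (n + 2)).two_dvd
  have h1 := key (m + d + e)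
  have h2 := key m
  have h3 := key (m + e)
  have h4 := key (m + d)
  nlinarith

/-- Bezout with double points -/
theorem bezout_double {F : Type} [Field F] [DecidableEq F] {f g : MvPolynomial (Fin 3) F} {d e k : ℕ} (hf : f.IsHomogeneous d)
    (hg : g.IsHomogeneous e) (hp : Prime f) (hfg : ¬ f ∣ g) (Z : Finset (F × F))
    (hZf : ∀ y ∈ Z, eval ![1, y.1, y.2] f = 0) (hZg : ∀ y ∈ Z, eval ![1, y.1, y.2] g = 0)
    (hZg' : ∀ y ∈ Z, ∀ i, eval ![1, y.1, y.2] (pderiv i g) = 0) (hk : d + e ≤ 2 * k + 1)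
    (hE : ∀ y ∈ Z, ∃ E : MvPolynomial (Fin 3) F, E.IsHomogeneous k ∧ eval ![1, y.1, y.2] E = 1 ∧
      ∀ z ∈ Z, z ≠ y → eval ![1, z.1, z.2] E = 0) :
    2 * Z.card ≤ d * e := by
  classical
  obtain ⟨m, hm⟩ : ∃ m, 2 * k + 1 = m + d + e := ⟨2 * k + 1 - (d + e), by omega⟩
  have hτ : ∀ y : F × F, ∃ τ : F × F, τ ≠ 0 ∧ τ.1 * eval ![1, y.1, y.2] (pderiv 1 f) + τ.2 * eval ![1, y.1, y.2] (pderiv 2 f) = 0 := by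
    intro y
    by_cases h : eval ![1, y.1, y.2] (pderiv 1 f) = 0 ∧ eval ![1, y.1, y.2] (pderiv 2 f) = 0
    · exact ⟨(1, 0), by simp, by simp [h.1]⟩
    · refine ⟨(-eval ![1, y.1, y.2] (pderiv 2 f), eval ![1, y.1, y.2] (pderiv 1 f)), ?_, by ring⟩
      intro h2
      rw [Prod.ext_iff] at h2
      simp at h2
      exact h ⟨h2.2, h2.1⟩
  choose τ hτ0 hτf using hτ
  let T0 : MvPolynomial (Fin 3) F →ₗ[F] (Z → F × F) :=
    { toFun := fun p y => (eval ![1, y.1.1, y.1.2] p,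
        (τ y).1 * eval ![1, y.1.1, y.1.2] (pderiv 1 p) + (τ y).2 * eval ![1, y.1.1, y.1.2] (pderiv 2 p))
      map_add' := by
        intro p p'; funext y
        refine Prod.ext ?_ ?_
        · simp
        · simp; ring
      map_smul' := by
        intro c p; funext y
        refine Prod.ext ?_ ?_
        · simp [smul_eq_C_mul]
        · simp [smul_eq_C_mul]; ring }
  have hT0 : ∀ p y, T0 p y = (eval ![1, y.1.1, y.1.2] p,
        (τ y).1 * eval ![1, y.1.1, y.1.2] (pderiv 1 p) + (τ y).2 * eval ![1, y.1.1, y.1.2] (pderiv 2 p)) := fun _ _ => rfl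
  let T := T0.comp (homogeneousSubmodule (Fin 3) F (m + d + e)).subtype
  have hker := rank_ideal hf hg hp hfg (LinearMap.ker T)
    (by
      intro p a hpa
      rw [LinearMap.mem_ker]
      funext y
      simp only [T, LinearMap.comp_apply, Submodule.subtype_apply, hT0, hpa]
      refine Prod.ext ?_ ?_
      · simp [hZf y y.2]
      · simp [hZf y y.2]
        linear_combination (eval ![1, y.1.1, y.1.2] a) * hτf y)
    (by
      intro p a hpa
      rw [LinearMap.mem_ker]
      funext y
      simp only [T, LinearMap.comp_apply, Submodule.subtype_apply, hT0, hpa]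
      refine Prod.ext ?_ ?_
      · simp [hZg y y.2]
      · simp [hZg y y.2, hZg' y y.2])
  have hsurj : LinearMap.range T = ⊤ := by
    rw [eq_top_iff]
    have hsingle : ∀ (y : Z) (v : F × F), Pi.single y v ∈ LinearMap.range T := by
      intro y v
      obtain ⟨E, hEh, hE1, hE0⟩ := hE y y.2
      obtain ⟨μ, hμ⟩ : ∃ μ : F × F, μ.1 * (τ y).1 + μ.2 * (τ y).2 = 1 := by
        by_cases h1 : (τ y).1 = 0
        · have h2 : (τ y).2 ≠ 0 := fun h2 => hτ0 y (Prod.ext h1 h2)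
          exact ⟨(0, (τ y).2⁻¹), by simp [h2]⟩
        · exact ⟨((τ y).1⁻¹, 0), by simp [h1]⟩
      have key : ∀ l : MvPolynomial (Fin 3) F, l.IsHomogeneous 1 → E * E * l ∈ homogeneousSubmodule (Fin 3) F (m + d + e) := by
        intro l hl
        have := (hEh.mul hEh).mul hl
        rw [← hm, two_mul]; exact this
      have key2 : ∀ (l : MvPolynomial (Fin 3) F) (hl : l.IsHomogeneous 1), Pi.single y (T ⟨_, key l hl⟩ y) ∈ LinearMap.range T := by
        intro l hl
        refine ⟨⟨_, key l hl⟩, ?_⟩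
        funext z
        by_cases hz : z = y
        · subst hz; simp
        · rw [Pi.single_eq_of_ne hz]
          have := hE0 z z.2 (fun h => hz (Subtype.ext h))
          simp only [T, LinearMap.comp_apply, Submodule.subtype_apply, hT0]
          refine Prod.ext ?_ ?_
          · simp [this]
          · simp [this]
      have kA := key2 (X 0) (isHomogeneous_X _ _)
      have kB := key2 (C μ.1 * (X 1 - C y.1.1 * X 0) + C μ.2 * (X 2 - C y.1.2 * X 0))
        ((((isHomogeneous_X _ _).sub (isHomogeneous_C_mul_X _ _)).C_mul _).add
          (((isHomogeneous_X _ _).sub (isHomogeneous_C_mul_X _ _)).C_mul _))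
      generalize hA : T ⟨_, key (X 0) (isHomogeneous_X _ _)⟩ y = A at kA
      have hA1 : A.1 = 1 := by
        rw [← hA]
        simp [T, hT0, hE1]
      generalize hB : T ⟨_, key (C μ.1 * (X 1 - C y.1.1 * X 0) + C μ.2 * (X 2 - C y.1.2 * X 0)) 
        ((((isHomogeneous_X _ _).sub (isHomogeneous_C_mul_X _ _)).C_mul _).add
          (((isHomogeneous_X _ _).sub (isHomogeneous_C_mul_X _ _)).C_mul _))⟩ y = B at kB
      have hB' : B = (0, 1) := by
        rw [← hB]
        simp only [T, LinearMap.comp_apply, Submodule.subtype_apply, hT0]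
        refine Prod.ext ?_ ?_
        · simp
        · simp [hE1]
          linear_combination hμ
      have : v = v.1 • A + (v.2 - v.1 * A.2) • B := by
        rw [hB']
        refine Prod.ext ?_ ?_
        · simp [hA1]
        · simp
      rw [this, Pi.single_add, Pi.single_smul, Pi.single_smul]
      exact add_mem (Submodule.smul_mem _ _ kA) (Submodule.smul_mem _ _ kB)
    intro φ _
    rw [← Finset.univ_sum_single φ]
    exact Submodule.sum_mem _ fun y _ => hsingle y _
  have e1 := LinearMap.finrank_range_add_finrank_ker T
  rw [hsurj, finrank_top, finrank_homog] at e1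
  have e2 : Module.finrank F (Z → F × F) = 2 * Z.card := by
    rw [Module.finrank_pi_fintype]
    simp [mul_comm]
  have e3 := choose_diff m d e
  omega


theorem pderiv_comm' {F : Type} [Field F] (i j : Fin 3) (p : MvPolynomial (Fin 3) F) :
    pderiv i (pderiv j p) = pderiv j (pderiv i p) := by
  have h : (⁅(pderiv i : Derivation F (MvPolynomial (Fin 3) F) (MvPolynomial (Fin 3) F)), pderiv j⁆ : Derivation F (MvPolynomial (Fin 3) F) (MvPolynomial (Fin 3) F)) = 0 := by
    apply MvPolynomial.derivation_ext
    intro k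
    rw [Derivation.commutator_apply]
    simp only [pderiv_X]
    simp only [Pi.single_apply]
    split_ifs <;> simp
  have h2 := congrArg (fun D : Derivation F (MvPolynomial (Fin 3) F) (MvPolynomial (Fin 3) F) => D p) h
  simp only [Derivation.commutator_apply] at h2
  exact sub_eq_zero.mp h2

theorem plane_bound {F : Type} [Field F] [Fintype F] [DecidableEq F] (q : ℕ) (hq : 2 < q) (hF : Fintype.card F = q ^ 2)
    (hq0 : (q : F) = 0)
    (f : MvPolynomial (Fin 3) F) (hf : f.IsHomogeneous (q + 1))
    (hne : ∀ w : F × F, w ≠ 0 → eval ![0, w.1, w.2] f ≠ 0) :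
    (Finset.univ.filter fun y : F × F => eval ![1, y.1, y.2] f = 0).card < q ^ 3 := by
  by_contra hN
  push Not at hN
  have hirr := plane_irred q hq hF f hf hne hN
  have hprime : Prime f := hirr.prime
  have hnd := not_dvd_frobG q hq hF hq0 f hf hne
  have hQ0 : ((Fintype.card F : ℕ) : F) = 0 := by rw [hF]; push_cast; rw [hq0]; simp
  have hQ0' : ((Fintype.card F : ℕ) : MvPolynomial (Fin 3) F) = 0 := by
    rw [← map_natCast (C : F →+* MvPolynomial (Fin 3) F), hQ0, map_zero]
  have hq0' : ((q : ℕ) : MvPolynomial (Fin 3) F) = 0 := by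
    have : ((q : ℕ) : MvPolynomial (Fin 3) F) = C (q : F) := by simp
    rw [this, hq0]; simp
  have hg : (frobG f).IsHomogeneous (q ^ 2 + q) := by
    apply IsHomogeneous.sum
    intro i _
    have := (isHomogeneous_X_pow (R := F) i (Fintype.card F)).mul (hf.pderiv (i := i))
    rw [hF] at this ⊢; exact this
  have hE : ∀ P : Fin 3 → F, ∑ i, P i * eval P (pderiv i f) = (q + 1) * eval P f := by
    intro P
    have := congrArg (eval P) hf.sum_X_mul_pderiv
    simpa using this
  have hE2 : ∀ (P : Fin 3 → F) (j), ∑ i, P i * eval P (pderiv i (pderiv j f)) = 0 := by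
    intro P j
    have := congrArg (eval P) (hf.pderiv (i := j)).sum_X_mul_pderiv
    simp only [Nat.add_sub_cancel, nsmul_eq_mul, hq0', zero_mul, map_zero] at this
    simpa using this
  have hb := bezout_double (k := 2 * (q ^ 2 - 1)) hf hg hprime hnd
    (Finset.univ.filter fun y : F × F => eval ![1, y.1, y.2] f = 0)
    (fun y hy => (Finset.mem_filter.mp hy).2)
    (fun y hy => by
      have h0 := (Finset.mem_filter.mp hy).2
      have := hE ![1, y.1, y.2]
      rw [h0, mul_zero] at this
      rw [frobG, map_sum]
      simp only [map_mul, map_pow, eval_X, FiniteField.pow_card]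
      exact this)
    (fun y hy i => by
      have := hE2 ![1, y.1, y.2] i
      rw [frobG, map_sum, map_sum]
      rw [← this]
      refine Finset.sum_congr rfl fun j _ => ?_
      rw [pderiv_mul, Derivation.leibniz_pow, pderiv_comm']
      simp only [nsmul_eq_mul, hQ0', smul_eq_mul, zero_mul, zero_add, map_mul, map_pow, eval_X, FiniteField.pow_card])
    (by have : 1 ≤ q ^ 2 := Nat.one_le_pow _ _ (by omega)
        zify [this]; nlinarith)
    (fun y hy => by
      refine ⟨(X 0 ^ (q ^ 2 - 1) - (X 1 - C y.1 * X 0) ^ (q ^ 2 - 1)) * (X 0 ^ (q ^ 2 - 1) - (X 2 - C y.2 * X 0) ^ (q ^ 2 - 1)), ?_, ?_, ?_⟩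
      · rw [two_mul]
        have hl : ∀ (i : Fin 3) (c : F), ((X i - C c * X 0 : MvPolynomial (Fin 3) F) ^ (q ^ 2 - 1)).IsHomogeneous (q ^ 2 - 1) := by
          intro i c
          simpa using ((isHomogeneous_X F i).sub (isHomogeneous_C_mul_X c 0)).pow (q ^ 2 - 1)
        exact ((isHomogeneous_X_pow _ _).sub (hl _ _)).mul ((isHomogeneous_X_pow _ _).sub (hl _ _))
      · have : q ^ 2 - 1 ≠ 0 := by have : 2 ^ 2 < q ^ 2 := Nat.pow_lt_pow_left hq (by norm_num)
                                   omega
        simp [zero_pow this]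
      · intro z _ hz
        have : z.1 - y.1 ≠ 0 ∨ z.2 - y.2 ≠ 0 := by
          by_contra h
          push Not at h
          exact hz (Prod.ext (sub_eq_zero.mp h.1) (sub_eq_zero.mp h.2))
        rcases this with h | h
        · have := FiniteField.pow_card_sub_one_eq_one _ h
          rw [hF] at this
          simp [this]
        · have := FiniteField.pow_card_sub_one_eq_one _ h
          rw [hF] at this
          simp [this])
  have h2 : 2 * q ^ 3 ≤ (q + 1) * (q ^ 2 + q) := le_trans (by omega) hb
  have h3 : 3 * q ^ 2 ≤ q * q ^ 2 := Nat.mul_le_mul_right _ hq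
  nlinarith


theorem degLex_lead {F : Type} [Field F] {p : MvPolynomial (Fin 3) F} {q : ℕ} (hd : p.totalDegree ≤ q)
    (hc : p.coeff (Finsupp.single 0 q) ≠ 0) : MonomialOrder.degLex.degree p = Finsupp.single 0 q := by
  set d := MonomialOrder.degLex.degree p with hdd
  have h1 : d.degree ≤ q := by rw [degree_degLexDegree]; exact hd
  have h2 : MonomialOrder.degLex.toSyn (Finsupp.single 0 q) ≤ MonomialOrder.degLex.toSyn d :=
    MonomialOrder.le_degree (mem_support_iff.mpr hc)
  rw [MonomialOrder.degLex_le_iff, Finsupp.DegLex.le_iff] at h2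
  simp only [ofDegLex_toDegLex, Finsupp.degree_single] at h2
  rcases h2 with h2 | ⟨h2, h3⟩
  · omega
  have h4 : q ≤ d 0 := by
    by_contra h
    push Not at h
    apply absurd h3
    rw [not_le]
    refine ⟨0, ?_, ?_⟩
    · intro j hj; exact absurd hj (by simp)
    · simpa using h
  have h5 : d 0 + d 1 + d 2 = q := by
    rw [h2, Finsupp.degree_eq_sum, Fin.sum_univ_three]
  ext i
  fin_cases i <;> simp <;> omega

theorem line_zeros {F : Type} [Field F] [Fintype F] [DecidableEq F] {p : MvPolynomial (Fin 3) F} {q : ℕ} (hd : p.totalDegree ≤ q)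
    (hc : p.coeff (Finsupp.single 0 q) ≠ 0)
    (hN : q * (Fintype.card F) ^ 2 ≤ (Finset.univ.filter fun x : Fin 3 → F => eval x p = 0).card) (s : Fin 2 → F) :
    (Finset.univ.filter fun t : F => eval (Fin.cons t s : Fin 3 → F) p = 0).card = q := by
  have hle : ∀ s : Fin 2 → F, (Finset.univ.filter fun t : F => eval (Fin.cons t s : Fin 3 → F) p = 0).card ≤ q := by
    intro s
    set P := Polynomial.map (eval s) (finSuccEquiv F 2 p) with hP
    have hco : P.coeff q ≠ 0 := by
      rw [hP, Polynomial.coeff_map]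
      have hcc : coeff 0 ((finSuccEquiv F 2 p).coeff q) ≠ 0 := by
        rw [finSuccEquiv_coeff_coeff]
        convert hc using 2
        ext i; refine Fin.cases ?_ (fun j => ?_) i
        · simp
        · simp
      have hne : (finSuccEquiv F 2 p).coeff q ≠ 0 := fun h => hcc (by rw [h]; simp)
      have h1 := totalDegree_coeff_finSuccEquiv_add_le p q hne
      have h2 : ((finSuccEquiv F 2 p).coeff q).totalDegree = 0 := by omega
      rw [totalDegree_eq_zero_iff_eq_C.mp h2]
      simpa using hcc
    have hP0 : P ≠ 0 := fun h => hco (by rw [h]; simp)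
    have hdeg : P.natDegree ≤ q := by
      refine Polynomial.natDegree_map_le.trans ?_
      rw [natDegree_finSuccEquiv]
      exact (degreeOf_le_totalDegree p 0).trans hd
    have hsub : (Finset.univ.filter fun t : F => eval (Fin.cons t s : Fin 3 → F) p = 0) ⊆ P.roots.toFinset := by
      intro t ht
      rw [Multiset.mem_toFinset, Polynomial.mem_roots hP0, Polynomial.IsRoot, hP, ← eval_eq_eval_mv_eval']
      exact (Finset.mem_filter.mp ht).2
    exact (Finset.card_le_card hsub).trans ((Multiset.toFinset_card_le _).trans ((Polynomial.card_roots' P).trans hdeg))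
  have hsum : ∑ s : Fin 2 → F, (Finset.univ.filter fun t : F => eval (Fin.cons t s : Fin 3 → F) p = 0).card =
      (Finset.univ.filter fun x : Fin 3 → F => eval x p = 0).card := by
    rw [← Finset.card_sigma]
    apply Finset.card_bij (fun x _ => (Fin.cons x.2 x.1 : Fin 3 → F))
    · intro x hx; simpa using hx
    · rintro ⟨a, b⟩ _ ⟨a', b'⟩ _ h
      have := Fin.cons_injective2 h
      simp at this
      simp [this]
    · intro x hx
      refine ⟨⟨Fin.tail x, x 0⟩, ?_, ?_⟩
      · simpa using hx
      · simp
  have hall := (Finset.sum_eq_sum_iff_of_le (s := Finset.univ) (fun s _ => hle s)).mp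
    (le_antisymm (Finset.sum_le_sum fun s _ => hle s) (by
      rw [hsum]; simpa [mul_comm] using hN))
  exact hall s (Finset.mem_univ _)

theorem eval_indep {F : Type} [Field F] {p : MvPolynomial (Fin 3) F} {i : Fin 3} (h : p.degreeOf i = 0) (x y : Fin 3 → F)
    (hxy : ∀ j, j ≠ i → x j = y j) : eval x p = eval y p := by
  rw [eval_eq', eval_eq']
  refine Finset.sum_congr rfl fun d hd => ?_
  congr 1
  refine Finset.prod_congr rfl fun j _ => ?_
  by_cases hj : j = i
  · have : d j ≤ 0 := by rw [← h, hj]; exact monomial_le_degreeOf i hd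
    rw [Nat.le_zero.mp this]; simp
  · rw [hxy j hj]


theorem prod_X_sub_C_poly (F : Type) [Field F] [Fintype F] :
    ∏ a : F, (Polynomial.X - Polynomial.C a) = (Polynomial.X ^ (Fintype.card F) - Polynomial.X : Polynomial F) := by
  have hc : 1 < Fintype.card F := Fintype.one_lt_card
  have hr := FiniteField.roots_X_pow_card_sub_X F
  have := Polynomial.prod_multiset_X_sub_C_of_monic_of_roots_card_eq
    (p := (Polynomial.X ^ (Fintype.card F) - Polynomial.X : Polynomial F))
    (by apply Polynomial.monic_X_pow_sub; simpa using hc)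
    (by rw [hr, FiniteField.X_pow_card_sub_X_natDegree_eq F hc]; simp [Finset.card_univ])
  rw [hr] at this
  exact this

theorem prod_X_sub_C_mv (F : Type) [Field F] [Fintype F] (i : Fin 3) :
    ∏ a : F, (X i - C a : MvPolynomial (Fin 3) F) = X i ^ (Fintype.card F) - X i := by
  have := congrArg (Polynomial.aeval (X i : MvPolynomial (Fin 3) F)) (prod_X_sub_C_poly F)
  simpa [map_prod, MvPolynomial.algebraMap_eq] using this

theorem totalDegree_XQ (F : Type) [Field F] [Fintype F] (i : Fin 3) :
    (X i ^ (Fintype.card F) - X i : MvPolynomial (Fin 3) F).totalDegree = Fintype.card F := by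
  have hc : 1 < Fintype.card F := Fintype.one_lt_card
  rw [sub_eq_add_neg, totalDegree_add_eq_left_of_totalDegree_lt]
  · rw [totalDegree_X_pow]
  · rw [totalDegree_neg, totalDegree_X_pow, totalDegree_X]; exact hc

theorem mv_frob {F : Type} [Field F] [Fintype F] (a b c : MvPolynomial (Fin 3) F) :
    (a - b - c) ^ (Fintype.card F) = a ^ (Fintype.card F) - b ^ (Fintype.card F) - c ^ (Fintype.card F) := by
  obtain ⟨p, hp⟩ := CharP.exists F
  obtain ⟨n, hpp, hn⟩ := FiniteField.card F p
  haveI : Fact p.Prime := ⟨hpp⟩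
  haveI : ExpChar (MvPolynomial (Fin 3) F) p := expChar_prime _ _
  rw [hn, sub_pow_expChar_pow, sub_pow_expChar_pow]

theorem par_core {F : Type} [Field F] [Fintype F] [DecidableEq F] {p : MvPolynomial (Fin 3) F} {q : ℕ} (hd : p.totalDegree ≤ q)
    (hq : q < Fintype.card F) 
    (hc : p.coeff (Finsupp.single 0 q) ≠ 0)
    (hN : q * (Fintype.card F) ^ 2 ≤ (Finset.univ.filter fun x : Fin 3 → F => eval x p = 0).card) :
    ∃ a b : F, ∀ x : Fin 3 → F, eval x p = eval ![x 0 - a * x 1 - b * x 2, 0, 0] p := by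
  have hp0 : p ≠ 0 := by rintro rfl; simp at hc
  have hlead := degLex_lead hd hc
  obtain ⟨g, R, hgR, hdeg, hR⟩ := MonomialOrder.degLex.div_single (b := p)
    (isUnit_iff_ne_zero.mpr (MonomialOrder.leadingCoeff_ne_zero_iff.mpr hp0)) (X 0 ^ (Fintype.card F) - X 0 : MvPolynomial (Fin 3) F)
  have hRdeg : R.totalDegree ≤ Fintype.card F := by
    have h1 : R = (X 0 ^ (Fintype.card F) - X 0) - p * g := by rw [hgR]; ring
    rw [h1]
    refine (totalDegree_sub _ _).trans (max_le (totalDegree_XQ F 0).le ?_)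
    exact (degLex_totalDegree_monotone hdeg).trans (totalDegree_XQ F 0).le
  have hR0 : ∀ c ∈ R.support, c 0 < q := by
    intro c hcs
    have := hR c hcs
    rw [hlead] at this
    by_contra h
    push Not at h
    apply this
    intro i
    by_cases hi : i = 0
    · subst hi; simpa using h
    · simp [Finsupp.single_apply, Ne.symm hi]
  have hRdeg0 : R = 0 ∨ R.degreeOf 0 < q := by
    by_cases hq0 : q = 0
    · left
      by_contra h
      obtain ⟨c, hcs⟩ := Finset.nonempty_iff_ne_empty.mpr (fun h' => h (support_eq_empty.mp h'))
      have := hR0 c hcs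
      omega
    · right
      rw [degreeOf_lt_iff (by omega)]
      exact hR0
  have hRv : ∀ x : Fin 3 → F, eval x R = 0 := by
    rcases hRdeg0 with h | hRdeg0
    · simp [h]
    intro x
    have hx : x = Fin.cons (x 0) (Fin.tail x) := (Fin.cons_self_tail x).symm
    rw [hx, eval_eq_eval_mv_eval']
    have hz : Polynomial.map (eval (Fin.tail x)) (finSuccEquiv F 2 R) = 0 := by
      apply Polynomial.eq_zero_of_natDegree_lt_card_of_eval_eq_zero' _
        (Finset.univ.filter fun t : F => eval (Fin.cons t (Fin.tail x) : Fin 3 → F) p = 0)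
      · intro t ht
        rw [← eval_eq_eval_mv_eval']
        have h1 := congrArg (eval (Fin.cons t (Fin.tail x) : Fin 3 → F)) hgR
        have h2 := (Finset.mem_filter.mp ht).2
        rw [map_add, map_mul, h2, mul_zero, zero_add] at h1
        rw [← h1]
        simp [FiniteField.pow_card]
      · rw [line_zeros hd hc hN]
        refine lt_of_le_of_lt Polynomial.natDegree_map_le ?_
        rw [natDegree_finSuccEquiv]; exact hRdeg0
    rw [hz]; simp
  obtain ⟨h, hh, hsum⟩ := combinatorial_nullstellensatz_exists_linearCombination (fun _ : Fin 3 => (Finset.univ : Finset F))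
    (fun _ => Finset.univ_nonempty) R (fun x _ => hRv x)
  have hconst : ∀ i, ∃ c : F, h i = C c := by
    intro i
    have h1 := (hh i).trans hRdeg
    by_cases h0 : h i = 0
    · exact ⟨0, by simp [h0]⟩
    rw [prod_X_sub_C_mv, totalDegree_mul_of_isDomain _ h0, totalDegree_XQ] at h1
    · exact ⟨_, totalDegree_eq_zero_iff_eq_C.mp (by omega)⟩
    · intro h2
      have := totalDegree_XQ F i
      rw [h2] at this
      have hc : 0 < Fintype.card F := Fintype.card_pos
      simp at this; omega
  choose c hcc using hconst
  have hRsum : R = C (c 0) * (X 0 ^ (Fintype.card F) - X 0) + C (c 1) * (X 1 ^ (Fintype.card F) - X 1) + C (c 2) * (X 2 ^ (Fintype.card F) - X 2) := by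
    rw [hsum, Finsupp.linearCombination_apply, Finsupp.sum_fintype _ _ (by simp), Fin.sum_univ_three]
    simp only [prod_X_sub_C_mv, hcc, smul_eq_mul]
  have hc1 : 1 < Fintype.card F := Fintype.one_lt_card
  have hc0 : c 0 = 0 := by
    by_contra hne
    have : coeff (Finsupp.single 0 (Fintype.card F)) R = c 0 := by
      rw [hRsum]
      simp [coeff_X_pow, coeff_X', Finsupp.single_left_inj, Finsupp.single_eq_single_iff]
      rw [if_neg (by omega)]; simp
    have h2 := hR0 _ (mem_support_iff.mpr (this ▸ hne))
    simp at h2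
    omega
  refine ⟨c 1, c 2, ?_⟩
  let σ : MvPolynomial (Fin 3) F →ₐ[F] MvPolynomial (Fin 3) F := aeval ![X 0 + C (c 1) * X 1 + C (c 2) * X 2, X 1, X 2]
  have hσ0 : σ (X 0) = X 0 + C (c 1) * X 1 + C (c 2) * X 2 := by simp [σ]
  have hσ1 : σ (X 1) = X 1 := by simp [σ]
  have hσ2 : σ (X 2) = X 2 := by simp [σ]
  have hσC : ∀ a, σ (C a) = C a := fun a => by simp [σ, MvPolynomial.algebraMap_eq]
  have hL : X 0 ^ (Fintype.card F) - X 0 = σ g * σ p := by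
    have h1 : g * p = (X 0 - C (c 1) * X 1 - C (c 2) * X 2) ^ (Fintype.card F) - (X 0 - C (c 1) * X 1 - C (c 2) * X 2) := by
      rw [mv_frob, mul_pow, mul_pow, ← C_pow, ← C_pow, FiniteField.pow_card, FiniteField.pow_card]
      rw [hRsum, hc0] at hgR
      simp only [C_0, zero_mul, zero_add] at hgR
      linear_combination -hgR
    have h2 := congrArg σ h1
    rw [map_mul] at h2
    rw [h2]
    simp only [map_sub, map_mul, map_pow, hσ0, hσ1, hσ2, hσC]
    ring
  have hXne : (X 0 ^ (Fintype.card F) - X 0 : MvPolynomial (Fin 3) F) ≠ 0 := by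
    intro h2
    have := totalDegree_XQ F 0
    rw [h2] at this
    simp at this; omega
  have hdeg0 : ∀ i : Fin 3, i ≠ 0 → (σ p).degreeOf i = 0 := by
    intro i hi
    have h1 := hXne
    rw [hL] at h1
    have h2 := degreeOf_mul_eq (n := i) (left_ne_zero_of_mul h1) (right_ne_zero_of_mul h1)
    rw [← hL] at h2
    have h3 : (X 0 ^ (Fintype.card F) - X 0 : MvPolynomial (Fin 3) F).degreeOf i ≤ 0 := by
      refine (degreeOf_sub_le i _ _).trans ?_
      rw [degreeOf_X_pow_of_ne _ hi, degreeOf_X_of_ne hi]; simp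
    omega
  have hev : ∀ y : Fin 3 → F, eval y (σ p) = eval ![y 0 + c 1 * y 1 + c 2 * y 2, y 1, y 2] p := by
    intro y
    have : (eval y).comp σ.toRingHom = eval ![y 0 + c 1 * y 1 + c 2 * y 2, y 1, y 2] := by
      ext i
      · simp
      · fin_cases i <;> simp [σ]
    exact congrArg (fun φ : MvPolynomial (Fin 3) F →+* F => φ p) this
  intro x
  have e1 := hev ![x 0 - c 1 * x 1 - c 2 * x 2, x 1, x 2]
  have e2 := hev ![x 0 - c 1 * x 1 - c 2 * x 2, 0, 0]
  have e3 : eval ![x 0 - c 1 * x 1 - c 2 * x 2, x 1, x 2] (σ p) = eval ![x 0 - c 1 * x 1 - c 2 * x 2, 0, 0] (σ p) := by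
    rw [eval_indep (hdeg0 1 (by decide)) _ ![x 0 - c 1 * x 1 - c 2 * x 2, 0, x 2] (by
      intro j hj; fin_cases j <;> simp at hj ⊢)]
    exact eval_indep (hdeg0 2 (by decide)) _ _ (by
      intro j hj; fin_cases j <;> simp at hj ⊢)
  have hx : x = ![x 0, x 1, x 2] := by ext i; fin_cases i <;> rfl
  simp at e1 e2
  have e4 : x 0 - c 1 * x 1 - c 2 * x 2 + c 1 * x 1 + c 2 * x 2 = x 0 := by ring
  rw [e4, ← hx] at e1
  rw [← e2, ← e3, e1]


theorem totalDegree_aeval_le' {F : Type} [Field F] {σ τ : Type} [Fintype σ] (g : σ → MvPolynomial τ F)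
    (hg : ∀ i, (g i).totalDegree ≤ 1) (p : MvPolynomial σ F) : (aeval g p).totalDegree ≤ p.totalDegree := by
  rw [aeval_def, eval₂_eq]
  refine totalDegree_finsetSum_le fun d hd => ?_
  refine (totalDegree_mul _ _).trans ?_
  rw [algebraMap_eq, totalDegree_C, zero_add]
  refine (totalDegree_finset_prod _ _).trans ?_
  refine le_trans (Finset.sum_le_sum fun i hi => (totalDegree_pow _ _).trans (Nat.mul_le_mul_left _ (hg i))) ?_
  simp only [mul_one]
  exact le_totalDegree hd

/-- affine substitution -/
noncomputable def affR {F : Type} [Field F] {σ : Type} {m : ℕ} (a : σ → F) (M : Fin m → σ → F) (f : MvPolynomial σ F) :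
    MvPolynomial (Fin m) F := aeval (fun i => C (a i) + ∑ j, C (M j i) * X j) f

theorem affR_eval {F : Type} [Field F] {σ : Type} {m : ℕ} (a : σ → F) (M : Fin m → σ → F) (f : MvPolynomial σ F)
    (x : Fin m → F) : eval x (affR a M f) = eval (a + ∑ j, x j • M j) f := by
  rw [affR]
  have : ((eval x).comp (aeval (fun i => C (a i) + ∑ j, C (M j i) * X j) : MvPolynomial σ F →ₐ[F] MvPolynomial (Fin m) F).toRingHom) = eval (a + ∑ j, x j • M j) := by
    ext i
    · simp
    · simp [mul_comm]
  exact DFunLike.congr_fun this f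

theorem affR_deg {F : Type} [Field F] {σ : Type} [Fintype σ] {m : ℕ} (a : σ → F) (M : Fin m → σ → F) (f : MvPolynomial σ F) :
    (affR a M f).totalDegree ≤ f.totalDegree := by
  refine totalDegree_aeval_le' _ (fun i => ?_) f
  refine (totalDegree_add _ _).trans (max_le (by simp) ?_)
  refine totalDegree_finsetSum_le fun j _ => ?_
  refine (totalDegree_mul _ _).trans ?_
  simp

theorem affR_homog {F : Type} [Field F] {σ : Type} {m n : ℕ} (M : Fin m → σ → F) {f : MvPolynomial σ F}
    (hf : f.IsHomogeneous n) : (affR 0 M f).IsHomogeneous n := by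
  have := hf.aeval (fun i => C ((0 : σ → F) i) + ∑ j, C (M j i) * X j) (n := 1) (fun i => by
    simp only [Pi.zero_apply, C_0, zero_add]
    refine IsHomogeneous.sum _ _ _ fun j _ => ?_
    simpa using (isHomogeneous_C _ _).mul (isHomogeneous_X F j))
  simpa [affR] using this

theorem lineR_coeff_hC {F : Type} [Field F] [Fintype F] {σ : Type} {n : ℕ} {p : MvPolynomial σ F}
    (hp : p.totalDegree ≤ n) (hn : n + 1 < Fintype.card F) (A B : σ → F) :
    (lineR A B p).coeff n = eval B (homogeneousComponent n p) := by
  have h0 : ∑ i ∈ Finset.range (n+1), homogeneousComponent i p = p := by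
    conv_rhs => rw [← sum_homogeneousComponent p]
    symm
    refine Finset.sum_subset (by intro i; simp; omega) fun i _ hi => ?_
    apply homogeneousComponent_eq_zero
    simp at hi; omega
  rw [Finset.sum_range_succ] at h0
  conv_lhs => rw [← h0]
  rw [← lineR_coeff_top (homogeneousComponent_isHomogeneous n p) hn A B]
  simp only [lineR, map_add, map_sum, Polynomial.coeff_add, Polynomial.finset_sum_coeff]
  rw [Finset.sum_eq_zero, zero_add]
  intro i hi
  apply Polynomial.coeff_eq_zero_of_natDegree_lt
  refine (lineR_deg A B _).trans_lt ?_
  refine lt_of_le_of_lt (IsHomogeneous.totalDegree_le (homogeneousComponent_isHomogeneous i p)) ?_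
  simpa using hi

theorem hom_eval_single {F : Type} [Field F] {n : ℕ} {p : MvPolynomial (Fin 3) F} (hp : p.IsHomogeneous n) :
    eval (Pi.single 0 1) p = coeff (Finsupp.single 0 n) p := by
  rw [eval_eq']
  rw [Finset.sum_eq_single (Finsupp.single 0 n)]
  · simp [Fin.prod_univ_three]
  · intro d hd hne
    have hw := hp (mem_support_iff.mp hd)
    simp [Finsupp.weight_apply, Finsupp.sum_fintype, Fin.sum_univ_three] at hw
    by_cases h1 : d 1 = 0
    · by_cases h2 : d 2 = 0
      · exfalso; apply hne; ext i; fin_cases i <;> simp [h1, h2]; omega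
      · simp [Fin.prod_univ_three, h2]
    · simp [Fin.prod_univ_three, h1]
  · intro h
    simp [notMem_support_iff.mp h]

theorem sz3 {F : Type} [Field F] [Fintype F] [DecidableEq F] {p : MvPolynomial (Fin 3) F} (hp : p ≠ 0) :
    (Finset.univ.filter fun x : Fin 3 → F => eval x p = 0).card ≤ p.totalDegree * Fintype.card F ^ 2 := by
  have h := schwartz_zippel_totalDegree hp (Finset.univ : Finset F)
  have hc : (0 : ℚ≥0) < Fintype.card F := by exact_mod_cast Fintype.card_pos
  simp only [Fintype.piFinset_univ, Finset.card_univ] at h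
  rw [div_le_div_iff₀ (by positivity) hc] at h
  have h2 : (Finset.univ.filter fun x : Fin 3 → F => eval x p = 0).card * Fintype.card F ≤ p.totalDegree * Fintype.card F ^ 3 := by
    exact_mod_cast h
  have := Fintype.card_pos (α := F)
  apply Nat.le_of_mul_le_mul_right _ this
  linarith [h2]

theorem exists_equiv_single {F : Type} [Field F] {v : Fin 3 → F} (hv : v ≠ 0) :
    ∃ A : (Fin 3 → F) ≃ₗ[F] (Fin 3 → F), A (Pi.single 0 1) = v := by
  have h0 : (Pi.single 0 1 : Fin 3 → F) ≠ 0 := by simp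
  let g := (LinearEquiv.toSpanNonzeroSingleton F _ _ h0).symm.trans (LinearEquiv.toSpanNonzeroSingleton F _ v hv)
  obtain ⟨A, hA⟩ := Submodule.exists_linearEquiv_restrict_eq g
  refine ⟨A, ?_⟩
  have := hA ⟨Pi.single 0 1, Submodule.mem_span_singleton_self _⟩
  rw [← this]
  have h2 : (LinearEquiv.toSpanNonzeroSingleton F _ _ h0) 1 = ⟨Pi.single 0 1, Submodule.mem_span_singleton_self _⟩ := by
    simp
  have h3 : (LinearEquiv.toSpanNonzeroSingleton F _ _ h0).symm ⟨Pi.single 0 1, Submodule.mem_span_singleton_self _⟩ = 1 := by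
    rw [← h2, LinearEquiv.symm_apply_apply]
  simp [g, h3]

theorem par_gen {F : Type} [Field F] [Fintype F] [DecidableEq F] {p : MvPolynomial (Fin 3) F} {q : ℕ}
    (hp : p ≠ 0) (hd : p.totalDegree ≤ q) (hq : q + 1 < Fintype.card F)
    (hN : q * (Fintype.card F) ^ 2 ≤ (Finset.univ.filter fun x : Fin 3 → F => eval x p = 0).card) :
    ∃ (v : Fin 3 → F) (L : (Fin 3 → F) →ₗ[F] F), L v = 1 ∧ eval v (homogeneousComponent q p) ≠ 0 ∧
      ∀ y, eval y p = eval (L y • v) p := by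
  have hdq : p.totalDegree = q := by
    refine le_antisymm hd ?_
    have := hN.trans (sz3 hp)
    exact Nat.le_of_mul_le_mul_right this (by positivity)
  have hh : homogeneousComponent q p ≠ 0 := by
    obtain ⟨d, hd1, hd2⟩ := Finset.exists_mem_eq_sup p.support (by simpa using hp) (fun s => s.sum fun _ e => e)
    intro h
    have h3 : coeff d (homogeneousComponent q p) = coeff d p := by
      rw [coeff_homogeneousComponent, if_pos]
      rw [← hdq, totalDegree, hd2]; rfl
    rw [h] at h3
    exact (mem_support_iff.mp hd1) (by simpa using h3.symm)
  obtain ⟨v, hv⟩ : ∃ v, eval v (homogeneousComponent q p) ≠ 0 := by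
    by_contra! hcon
    apply hh
    apply (homogeneousComponent_isHomogeneous q p).eq_zero_of_forall_eval_eq_zero_of_le_card hcon
    simp; omega
  by_cases hv0 : v = 0
  · -- then q = 0
    have hq0 : q = 0 := by
      by_contra hq0
      apply hv
      rw [hv0, show (0 : Fin 3 → F) = (0:F) • 0 by simp, hom_eval_smul (homogeneousComponent_isHomogeneous q p), zero_pow hq0, zero_mul]
    subst hq0
    rw [totalDegree_eq_zero_iff_eq_C] at hdq
    refine ⟨Pi.single 0 1, LinearMap.proj 0, by simp, ?_, fun y => ?_⟩
    · rw [hdq] at hv ⊢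
      simpa using hv
    · rw [hdq]; simp
  obtain ⟨A, hA⟩ := exists_equiv_single hv0
  set p' := affR 0 (fun j => A (Pi.single j 1)) p with hp'
  have hev : ∀ x, eval x p' = eval (A x) p := by
    intro x
    rw [hp', affR_eval, zero_add]
    congr 2
    conv_rhs => rw [pi_eq_sum_univ' x]
    simp [Pi.single_apply, map_sum]
  have hd' : p'.totalDegree ≤ q := (affR_deg _ _ _).trans hd
  have hline : lineR 0 (Pi.single 0 1) p' = lineR 0 v p := by
    rw [← sub_eq_zero]
    apply poly_zero_of_eval_ne
    · intro x _
      rw [Polynomial.eval_sub, lineR_eval, lineR_eval, hev, zero_add, map_smul, hA, zero_add, sub_self]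
    · have h1 := lineR_deg 0 (Pi.single 0 1) p'
      have h2 := lineR_deg 0 v p
      have := Polynomial.natDegree_sub_le (lineR 0 (Pi.single 0 1) p') (lineR 0 v p)
      have : max (lineR 0 (Pi.single 0 1) p').natDegree (lineR 0 v p).natDegree ≤ q := max_le (by omega) (by omega)
      omega
  have hc : p'.coeff (Finsupp.single 0 q) ≠ 0 := by
    have h1 := hom_eval_single (homogeneousComponent_isHomogeneous q p')
    rw [← lineR_coeff_hC hd' hq 0, hline, lineR_coeff_hC hd hq 0, coeff_homogeneousComponent, if_pos (by simp)] at h1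
    rwa [← h1]
  obtain ⟨a, b, hab⟩ := par_core hd' (by omega) hc (hN.trans (le_of_eq (by
    symm
    apply Finset.card_bij (fun x _ => A x)
    · intro x hx; simpa [hev] using hx
    · intro x _ y _ h; exact A.injective h
    · intro y hy; exact ⟨A.symm y, by simpa [hev] using hy, by simp⟩)))
  let L0 : (Fin 3 → F) →ₗ[F] F := LinearMap.proj 0 - a • LinearMap.proj 1 - b • LinearMap.proj 2
  refine ⟨v, L0 ∘ₗ A.symm.toLinearMap, ?_, hv, fun y => ?_⟩
  · have : A.symm v = Pi.single 0 1 := by rw [← hA]; simp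
    simp [this, L0]
  · have h1 := hab (A.symm y)
    rw [hev, hev, A.apply_symm_apply] at h1
    rw [h1]
    congr 2
    rw [← hA, ← map_smul]
    congr 1
    ext i
    fin_cases i <;> simp [L0]


theorem count_proj {F : Type} [Field F] [Fintype F] [DecidableEq F] {n d : ℕ} (hd : d ≠ 0) {f : MvPolynomial (Fin n) F}
    (hf : f.IsHomogeneous d) (W : Submodule F (Fin n → F)) [DecidablePred (· ∈ W)] :
    (Finset.univ.filter fun v => v ∈ W ∧ eval v f = 0).card =
      1 + (Fintype.card F - 1) * (hypersurfacePts f ∩ projPts W).ncard := by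
  classical
  have hf0 : eval 0 f = 0 := by
    have := hom_eval_smul hf 0 0
    simpa [zero_pow hd] using this
  have h1 : (↑(Finset.univ.filter fun v => v ∈ W ∧ eval v f = 0) : Set (Fin n → F)) =
      insert 0 ((fun x : Projectivization F (Fin n → F) × Fˣ => (x.2 : F) • x.1.rep) '' ((hypersurfacePts f ∩ projPts W) ×ˢ Set.univ)) := by
    ext v
    simp only [Finset.coe_filter, Finset.mem_univ, true_and, Set.mem_setOf_eq, Set.mem_insert_iff, Set.mem_image, Set.mem_prod, Set.mem_univ, and_true, Prod.exists]
    constructor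
    · rintro ⟨hW, hv⟩
      by_cases h0 : v = 0
      · exact Or.inl h0
      right
      obtain ⟨u, hu⟩ := Projectivization.exists_smul_eq_mk_rep F v h0
      have hu' : v = ((u⁻¹ : Fˣ) : F) • (Projectivization.mk F v h0).rep := by
        rw [← hu, Units.smul_def, smul_smul]; simp
      refine ⟨Projectivization.mk F v h0, u⁻¹, ⟨?_, ?_⟩, hu'.symm⟩
      · simp only [hypersurfacePts, Set.mem_setOf_eq]
        rw [← hu, Units.smul_def, hom_eval_smul hf, hv, mul_zero]
      · simp only [projPts, Set.mem_setOf_eq, Projectivization.submodule_mk]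
        rw [Submodule.span_singleton_le_iff_mem]; exact hW
    · rintro (rfl | ⟨P, u, ⟨h1, h2⟩, rfl⟩)
      · exact ⟨W.zero_mem, hf0⟩
      · simp only [hypersurfacePts, projPts, Set.mem_setOf_eq, Projectivization.submodule_eq, Submodule.span_singleton_le_iff_mem] at h1 h2
        exact ⟨W.smul_mem _ h2, by rw [hom_eval_smul hf, h1, mul_zero]⟩
  rw [← Set.ncard_coe_finset, h1, Set.ncard_insert_of_notMem, Set.ncard_image_of_injective, Set.ncard_prod, Set.ncard_univ, Nat.card_units, Nat.card_eq_fintype_card]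
  · ring
  · rintro ⟨P, u⟩ ⟨P', u'⟩ h
    simp only at h
    have hP : P = P' := by
      rw [← P.mk_rep, ← P'.mk_rep, Projectivization.mk_eq_mk_iff]
      refine ⟨u⁻¹ * u', ?_⟩
      rw [mul_smul, Units.smul_def u', ← h, Units.smul_def, smul_smul]
      simp
    subst hP
    have := smul_left_injective F P.rep_nonzero h
    simp only [Prod.mk.injEq, true_and]
    exact Units.ext this
  · rintro ⟨⟨P, u⟩, -, h⟩
    simp at h
    exact P.rep_nonzero h

theorem dbl {V ι F : Type} [Field F] [AddCommGroup V] [Module F V] [Fintype V] [Fintype ι] [DecidableEq V]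
    (U W : Submodule F V) (hWU : W ≤ U) (Z : V → Prop) [DecidablePred Z] [DecidablePred (· ∈ U)] [DecidablePred (· ∈ W)]
    (m : ι → V) (hm : ∀ i, m i ∈ W) :
    ∑ a ∈ Finset.univ.filter (fun a => a ∈ U ∧ a ∉ W), (Finset.univ.filter fun i => Z (a + m i)).card =
      Fintype.card ι * (Finset.univ.filter fun a => (a ∈ U ∧ a ∉ W) ∧ Z a).card := by
  simp only [Finset.card_filter]
  rw [Finset.sum_comm, ← smul_eq_mul, ← Finset.card_univ, ← Finset.sum_const]
  refine Finset.sum_congr rfl fun i _ => ?_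
  rw [← Finset.card_filter, ← Finset.card_filter, Finset.filter_filter]
  apply Finset.card_bij (fun a _ => a + m i)
  · intro a ha
    simp only [Finset.mem_filter, Finset.mem_univ, true_and] at ha ⊢
    refine ⟨⟨U.add_mem ha.1.1 (hWU (hm i)), fun h => ha.1.2 ?_⟩, ha.2⟩
    simpa using W.sub_mem h (hm i)
  · intro a _ b _ h; simpa using h
  · intro b hb
    simp only [Finset.mem_filter, Finset.mem_univ, true_and] at hb
    refine ⟨b - m i, ?_, by simp⟩
    simp only [Finset.mem_filter, Finset.mem_univ, true_and, sub_add_cancel]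
    exact ⟨⟨U.sub_mem hb.1.1 (hWU (hm i)), fun h => hb.1.2 (by simpa using W.add_mem h (hm i))⟩, hb.2⟩

/-- bundled hypotheses, affine version -/
structure Hyp (q : ℕ) {F : Type} [Field F] [Fintype F] (f : MvPolynomial (Fin 7) F)
    (W : Submodule F (Fin 7 → F)) : Prop where
  q2 : 2 < q
  cF : Fintype.card F = q ^ 2
  q0 : (q : F) = 0
  hf : f.IsHomogeneous (q+1)
  rk : Module.finrank F W = 4
  hZ3 : {v | v ∈ W ∧ eval v f = 0}.ncard = q ^ 6
  hZ : {v | v ∉ W ∧ eval v f = 0}.ncard + q ^ 7 = q ^ 13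
  ns : ∀ U : Submodule F (Fin 7 → F), Module.finrank F U = 4 → ∃ v ∈ U, eval v f ≠ 0
  fr : ∀ x y : F, (x + y) ^ q = x ^ q + y ^ q

theorem card_sub {F : Type} [Field F] [Fintype F] {n : ℕ} (W : Submodule F (Fin n → F)) [DecidablePred (· ∈ W)] :
    (Finset.univ.filter fun v => v ∈ W).card = Fintype.card F ^ Module.finrank F W := by
  classical
  rw [← Module.card_eq_pow_finrank (K := F) (V := W), Fintype.card_subtype]

theorem card_compl {F : Type} [Field F] [Fintype F] {n : ℕ} (U W : Submodule F (Fin n → F)) (h : W ≤ U)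
    [DecidablePred (· ∈ W)] [DecidablePred (· ∈ U)] :
    (Finset.univ.filter fun v => v ∈ U ∧ v ∉ W).card + Fintype.card F ^ Module.finrank F W = Fintype.card F ^ Module.finrank F U := by
  classical
  rw [← card_sub, ← card_sub, ← Finset.card_union_of_disjoint]
  · congr 1
    ext v
    simp only [Finset.mem_union, Finset.mem_filter, Finset.mem_univ, true_and]
    constructor
    · rintro (h1 | h1)
      exacts [h1.1, h h1]
    · intro h1; tauto
  · rw [Finset.disjoint_filter]; tauto

theorem step2 {q : ℕ} {F : Type} [Field F] [Fintype F] {f : MvPolynomial (Fin 7) F}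
    {W : Submodule F (Fin 7 → F)} (H : Hyp q f W) (v w : Fin 7 → F) (hv : v ∈ W) (hw : w ∈ W) :
    ∃ y z : F, (y ≠ 0 ∨ z ≠ 0) ∧ eval (y • v + z • w) f = 0 := by
  classical
  by_contra! hcon
  have hb : ∀ a ∈ Finset.univ.filter (fun a => a ∈ (⊤ : Submodule F (Fin 7 → F)) ∧ a ∉ W),
      (Finset.univ.filter fun i : F × F => eval (a + (i.1 • v + i.2 • w)) f = 0).card ≤ q ^ 3 - 1 := by
    intro a ha
    have := plane_bound q H.q2 H.cF H.q0 (affR 0 ![a, v, w] f) (affR_homog _ H.hf) (fun x hx => by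
      rw [affR_eval]
      have h1 : (0 : Fin 7 → F) + ∑ j, (![0, x.1, x.2] : Fin 3 → F) j • (![a, v, w] : Fin 3 → Fin 7 → F) j = x.1 • v + x.2 • w := by
        simp [Fin.sum_univ_three]
      rw [h1]
      apply hcon
      by_contra! h2
      exact hx (Prod.ext h2.1 h2.2))
    have h3 : (Finset.univ.filter fun i : F × F => eval (a + (i.1 • v + i.2 • w)) f = 0) =
      (Finset.univ.filter fun y:F×F => eval ![1,y.1,y.2] (affR 0 ![a, v, w] f) = 0) := by
      apply Finset.filter_congr
      intro y _
      rw [affR_eval]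
      simp [Fin.sum_univ_three, add_assoc]
    rw [h3]
    omega
  have h1 := Finset.sum_le_card_nsmul _ _ _ hb
  rw [dbl ⊤ W le_top (fun v => eval v f = 0) (fun i : F × F => i.1 • v + i.2 • w) (fun i => W.add_mem (W.smul_mem _ hv) (W.smul_mem _ hw))] at h1
  have h2 := card_compl ⊤ W le_top
  have h4 := H.hZ
  have h5 : {v | v ∉ W ∧ eval v f = 0}.ncard = (Finset.univ.filter fun a => (a ∈ (⊤ : Submodule F (Fin 7 → F)) ∧ a ∉ W) ∧ eval a f = 0).card := by
    rw [← Set.ncard_coe_finset]; congr 1; ext; simp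
  rw [h5] at h4
  simp only [finrank_top, Module.finrank_fin_fun, H.rk, H.cF, Fintype.card_prod, smul_eq_mul] at h1 h2
  have hq := H.q2
  obtain ⟨N, hN⟩ : ∃ N, N = (Finset.univ.filter fun a => (a ∈ (⊤ : Submodule F (Fin 7 → F)) ∧ a ∉ W) ∧ eval a f = 0).card := ⟨_, rfl⟩
  obtain ⟨M, hM⟩ : ∃ M, M = (Finset.univ.filter fun a => (a ∈ (⊤ : Submodule F (Fin 7 → F)) ∧ a ∉ W)).card := ⟨_, rfl⟩
  rw [← hN] at h1 h4
  rw [← hM] at h1 h2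
  have h6 : M = q * N := by
    have : q * (N + q^7) = q * q ^ 13 := by rw [h4]
    have e1 : (q^2)^7 = q * q^13 := by ring
    have e2 : (q^2)^4 = q * q^7 := by ring
    rw [mul_add] at this
    omega
  have hNp : 0 < N := by
    have : q ^ 7 < q ^ 13 := Nat.pow_lt_pow_right (by omega) (by norm_num)
    omega
  have h8 : q * (q^3 - 1) < q^2 * q^2 := by
    have : 0 < q ^ 3 := by positivity
    have : q * (q^3 - 1) < q * q^3 := Nat.mul_lt_mul_of_pos_left (by omega) (by omega)
    calc _ < _ := this
      _ = _ := by ring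
  have h9 := Nat.mul_lt_mul_of_pos_right h8 hNp
  rw [h6] at h1
  have : q * N * (q ^ 3 - 1) = q * (q ^ 3 - 1) * N := by ring
  omega


theorem step3 {q : ℕ} {F : Type} [Field F] [Fintype F] {f : MvPolynomial (Fin 7) F}
    {W : Submodule F (Fin 7 → F)} (H : Hyp q f W) :
    ∃ P : Submodule F (Fin 7 → F), P ≤ W ∧ Module.finrank F P = 3 ∧ ∀ v ∈ W, (eval v f = 0 ↔ v ∈ P) := by
  classical
  have hq := H.q2
  have key : ∀ w ∈ W, eval w f ≠ 0 → ∀ x ∈ W, eval x f = 0 → ∀ y ∈ W, eval y f = 0 → x ≠ y + w := by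
    intro w hw hfw x hx hfx y hy hfy hxy
    let T := {v | v ∈ W ∧ eval v f = 0}
    let m : T × F → W := fun t => ⟨t.1.1 + t.2 • w, W.add_mem t.1.2.1 (W.smul_mem _ hw)⟩
    have hsurj : Function.Surjective m := by
      rintro ⟨v, hv⟩
      obtain ⟨a, b, hab, h0⟩ := step2 H v w hv hw
      have ha : a ≠ 0 := by
        rintro rfl
        have hb : b ≠ 0 := by simpa using hab
        rw [zero_smul, zero_add, hom_eval_smul H.hf] at h0
        rcases mul_eq_zero.mp h0 with h | h
        · exact hb (pow_eq_zero_iff (by omega) |>.mp h)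
        · exact hfw h
      refine ⟨(⟨v + (a⁻¹ * b) • w, W.add_mem hv (W.smul_mem _ hw), ?_⟩, -(a⁻¹ * b)), ?_⟩
      · have : v + (a⁻¹ * b) • w = a⁻¹ • (a • v + b • w) := by
          rw [smul_add, smul_smul, smul_smul, inv_mul_cancel₀ ha, one_smul]
        show eval _ f = 0
        rw [this, hom_eval_smul H.hf, h0, mul_zero]
      · apply Subtype.ext; simp [m]
    have hinj : Function.Injective m := by
      refine ((Nat.bijective_iff_surjective_and_card m).mpr ⟨hsurj, ?_⟩).1
      rw [Nat.card_prod, Nat.card_eq_fintype_card (α := F), Nat.card_eq_fintype_card (α := W), Module.card_eq_pow_finrank (K := F) (V := W), H.rk, H.cF]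
      have := H.hZ3
      rw [← Nat.card_coe_set_eq] at this
      rw [show Nat.card T = q ^ 6 from this]; ring
    have := @hinj (⟨x, hx, hfx⟩, 0) (⟨y, hy, hfy⟩, 1) (by apply Subtype.ext; simp [m, hxy])
    simp at this
  have hf0 : eval 0 f = 0 := by
    have := hom_eval_smul H.hf 0 0
    simpa using this
  have hsub : ∀ x ∈ W, eval x f = 0 → ∀ y ∈ W, eval y f = 0 → eval (x - y) f = 0 := by
    intro x hx hfx y hy hfy
    by_contra h
    exact key (x - y) (W.sub_mem hx hy) h x hx hfx y hy hfy (by simp)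
  let P : Submodule F (Fin 7 → F) :=
    { carrier := {v | v ∈ W ∧ eval v f = 0}
      zero_mem' := ⟨W.zero_mem, hf0⟩
      add_mem' := by
        rintro x y ⟨hx, hfx⟩ ⟨hy, hfy⟩
        refine ⟨W.add_mem hx hy, ?_⟩
        have h1 := hsub 0 W.zero_mem hf0 y hy hfy
        have h2 := hsub x hx hfx (0 - y) (W.sub_mem W.zero_mem hy) h1
        simpa using h2
      smul_mem' := by
        rintro c x ⟨hx, hfx⟩
        refine ⟨W.smul_mem c hx, ?_⟩
        rw [hom_eval_smul H.hf, hfx, mul_zero] }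
  refine ⟨P, fun v hv => hv.1, ?_, fun v hv => ⟨fun h => ⟨hv, h⟩, fun h => h.2⟩⟩
  have h1 := Module.card_eq_pow_finrank (K := F) (V := P)
  have h2 := H.hZ3
  rw [← Nat.card_coe_set_eq] at h2
  rw [← Nat.card_eq_fintype_card, show Nat.card P = q ^ 6 from h2, H.cF, ← pow_mul] at h1
  have := Nat.pow_right_injective (show 2 ≤ q by omega) h1
  omega

theorem lineR_affR {F : Type} [Field F] {σ : Type} {m : ℕ} (a : σ → F) (M : Fin m → σ → F) (f : MvPolynomial σ F)
    (A B : Fin m → F) : lineR A B (affR a M f) = lineR (a + ∑ j, A j • M j) (∑ j, B j • M j) f := by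
  rw [lineR, lineR, affR]
  rw [← AlgHom.comp_apply]
  congr 1
  ext1 i
  simp [Finset.sum_mul, mul_add, Finset.sum_add_distrib, add_assoc]
  congr 1
  · exact Finset.sum_congr rfl fun j _ => by ring
  · exact Finset.sum_congr rfl fun j _ => by ring

/-- data after step 3 -/
structure Hyp2 (q : ℕ) {F : Type} [Field F] [Fintype F] (f : MvPolynomial (Fin 7) F)
    (W P : Submodule F (Fin 7 → F)) : Prop where
  H : Hyp q f W
  le : P ≤ W
  rk : Module.finrank F P = 3
  mem : ∀ v ∈ W, (eval v f = 0 ↔ v ∈ P)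

theorem Hyp2.q1 {q : ℕ} {F : Type} [Field F] [Fintype F] {f : MvPolynomial (Fin 7) F}
    {W P : Submodule F (Fin 7 → F)} (H : Hyp2 q f W P) : q + 2 < Fintype.card F := by
  rw [H.H.cF]; have := H.H.q2; nlinarith

theorem step4a {q : ℕ} {F : Type} [Field F] [Fintype F] {f : MvPolynomial (Fin 7) F}
    {W P : Submodule F (Fin 7 → F)} (H : Hyp2 q f W P) (M : Fin 3 → Fin 7 → F) (hM : ∀ j, M j ∈ P) (a : Fin 7 → F) :
    (affR a M f).totalDegree ≤ q := by
  have h1 : (affR a M f).totalDegree ≤ q + 1 := (affR_deg _ _ _).trans H.H.hf.totalDegree_le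
  have hc : homogeneousComponent (q+1) (affR a M f) = 0 := by
    apply (homogeneousComponent_isHomogeneous _ _).eq_zero_of_forall_eval_eq_zero_of_le_card
    · intro B
      rw [← lineR_coeff_hC h1 H.q1 0, lineR_affR, lineR_coeff_top H.H.hf H.q1]
      have : ∑ j, B j • M j ∈ P := P.sum_mem fun j _ => P.smul_mem _ (hM j)
      exact (H.mem _ (H.le this)).mpr this
    · have := H.q1
      simp; omega
  by_contra hlt
  have heq : (affR a M f).totalDegree = q + 1 := by omega
  have hp : affR a M f ≠ 0 := by intro h; rw [h] at heq; simp at heq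
  obtain ⟨d, hd1, hd2⟩ := Finset.exists_mem_eq_sup (affR a M f).support (by simpa using hp) (fun s => s.sum fun _ e => e)
  have h3 : coeff d (homogeneousComponent (q+1) (affR a M f)) = coeff d (affR a M f) := by
    rw [coeff_homogeneousComponent, if_pos]
    rw [← heq, totalDegree, hd2]; rfl
  rw [hc] at h3
  exact (mem_support_iff.mp hd1) (by simpa using h3.symm)

theorem step4b {q : ℕ} {F : Type} [Field F] [Fintype F] {f : MvPolynomial (Fin 7) F}
    {W P : Submodule F (Fin 7 → F)} (H : Hyp2 q f W P) (M : Fin 3 → Fin 7 → F) (hM : Submodule.span F (Set.range M) = P)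
    (a : Fin 7 → F) (ha : a ∉ W) : affR a M f ≠ 0 := by
  intro h0
  have hP : ∀ x ∈ P, eval (a + x) f = 0 := by
    intro x hx
    rw [← hM, Submodule.mem_span_range_iff_exists_fun] at hx
    obtain ⟨c, rfl⟩ := hx
    rw [← affR_eval, h0]; simp
  have haP : a ∉ P := fun h => ha (H.le h)
  have hrk : Module.finrank F (P ⊔ Submodule.span F {a} : Submodule F (Fin 7 → F)) = 4 := by
    have h1 := Submodule.finrank_sup_add_finrank_inf_eq P (Submodule.span F {a})
    have h2 : P ⊓ Submodule.span F {a} = ⊥ := by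
      rw [← disjoint_iff]
      rw [Submodule.disjoint_span_singleton' (by rintro rfl; exact haP P.zero_mem)]
      exact haP
    rw [h2, finrank_bot, H.rk, finrank_span_singleton (by rintro rfl; exact haP P.zero_mem)] at h1
    omega
  obtain ⟨v, hv, hfv⟩ := H.H.ns _ hrk
  rw [Submodule.mem_sup] at hv
  obtain ⟨x, hx, y, hy, rfl⟩ := hv
  rw [Submodule.mem_span_singleton] at hy
  obtain ⟨c, rfl⟩ := hy
  apply hfv
  by_cases hc : c = 0
  · subst hc; simpa using (H.mem x (H.le hx)).mpr hx
  · have : x + c • a = c • (a + c⁻¹ • x) := by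
      rw [smul_add, smul_smul, mul_inv_cancel₀ hc, one_smul, add_comm]
    rw [this, hom_eval_smul H.H.hf, hP _ (P.smul_mem _ hx), mul_zero]

theorem step4c {q : ℕ} {F : Type} [Field F] [Fintype F] [DecidableEq F] {f : MvPolynomial (Fin 7) F}
    {W P : Submodule F (Fin 7 → F)} (H : Hyp2 q f W P) (M : Fin 3 → Fin 7 → F) (hM : Submodule.span F (Set.range M) = P)
    (a : Fin 7 → F) (ha : a ∉ W) : (Finset.univ.filter fun x : Fin 3 → F => eval x (affR a M f) = 0).card = q ^ 5 := by
  classical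
  have hMP : ∀ j, M j ∈ P := fun j => hM ▸ Submodule.subset_span ⟨j, rfl⟩
  have hb : ∀ a ∈ Finset.univ.filter (fun a => a ∈ (⊤ : Submodule F (Fin 7 → F)) ∧ a ∉ W),
      (Finset.univ.filter fun x : Fin 3 → F => eval (a + ∑ j, x j • M j) f = 0).card ≤ q ^ 5 := by
    intro a ha
    simp only [Finset.mem_filter, Finset.mem_univ, true_and, Submodule.mem_top] at ha
    have := sz3 (step4b H M hM a ha)
    simp only [affR_eval] at this
    refine this.trans ?_
    rw [H.H.cF]
    calc _ ≤ q * (q^2)^2 := Nat.mul_le_mul_right _ (step4a H M hMP a)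
      _ = _ := by ring
  have h1 := dbl ⊤ W le_top (fun v => eval v f = 0) (fun x : Fin 3 → F => ∑ j, x j • M j) (fun x => W.sum_mem fun j _ => W.smul_mem _ (H.le (hMP j)))
  have h2 := card_compl ⊤ W le_top
  have h4 := H.H.hZ
  have h5 : {v | v ∉ W ∧ eval v f = 0}.ncard = (Finset.univ.filter fun a => (a ∈ (⊤ : Submodule F (Fin 7 → F)) ∧ a ∉ W) ∧ eval a f = 0).card := by
    rw [← Set.ncard_coe_finset]; congr 1; ext; simp
  rw [h5] at h4
  simp only [finrank_top, Module.finrank_fin_fun, H.H.rk, H.H.cF, Fintype.card_pi, smul_eq_mul] at h1 h2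
  have hs : ∑ a ∈ Finset.univ.filter (fun a => a ∈ (⊤ : Submodule F (Fin 7 → F)) ∧ a ∉ W), (Finset.univ.filter fun x : Fin 3 → F => eval (a + ∑ j, x j • M j) f = 0).card
    = ∑ a ∈ Finset.univ.filter (fun a => a ∈ (⊤ : Submodule F (Fin 7 → F)) ∧ a ∉ W), q ^ 5 := by
    rw [h1, Finset.sum_const, smul_eq_mul]
    generalize (Finset.univ.filter fun a => (a ∈ (⊤ : Submodule F (Fin 7 → F)) ∧ a ∉ W) ∧ eval a f = 0).card = N at *
    generalize (Finset.univ.filter fun a => (a ∈ (⊤ : Submodule F (Fin 7 → F)) ∧ a ∉ W)).card = K at *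
    have h6 : K = q * N := by
      have : q * (N + q^7) = q * q ^ 13 := by rw [h4]
      have e1 : (q^2)^7 = q * q^13 := by ring
      have e2 : (q^2)^4 = q * q^7 := by ring
      rw [mul_add] at this
      omega
    rw [h6]
    simp
    ring
  have := (Finset.sum_eq_sum_iff_of_le hb).mp hs a (by simpa using ha)
  simpa only [affR_eval] using this

theorem step5 {q : ℕ} {F : Type} [Field F] [Fintype F] {f : MvPolynomial (Fin 7) F}
    {W P : Submodule F (Fin 7 → F)} (H : Hyp2 q f W P) :
    ∃ M : Fin 3 → Fin 7 → F, LinearIndependent F M ∧ Submodule.span F (Set.range M) = P := by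
  let b := Module.finBasisOfFinrankEq F P H.rk
  refine ⟨fun j => (b j : Fin 7 → F), ?_, ?_⟩
  · exact b.linearIndependent.map' P.subtype (by simp)
  · have := b.span_eq
    have h2 := congrArg (Submodule.map P.subtype) this
    rw [Submodule.map_span, Submodule.map_top, Submodule.range_subtype, ← Set.range_comp] at h2
    exact h2

/-- the parallelism -/
theorem step5b {q : ℕ} {F : Type} [Field F] [Fintype F] {f : MvPolynomial (Fin 7) F}
    {W P : Submodule F (Fin 7 → F)} (H : Hyp2 q f W P) (a : Fin 7 → F) (ha : a ∉ W) :
    ∃ x0 ∈ P, ∃ L : (Fin 7 → F) →ₗ[F] F, L x0 = 1 ∧ (lineR a x0 f).coeff q ≠ 0 ∧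
      ∀ x ∈ P, eval (a + x) f = eval (a + L x • x0) f := by
  classical
  obtain ⟨M, hli, hM⟩ := step5 H
  have hMP : ∀ j, M j ∈ P := fun j => hM ▸ Submodule.subset_span ⟨j, rfl⟩
  have hq1 := H.q1
  obtain ⟨v, L, h1, h2, h3⟩ := par_gen (step4b H M hM a ha) (step4a H M hMP a) (by omega) (by
    rw [step4c H M hM a ha, H.H.cF]; apply le_of_eq; ring)
  let φ : (Fin 3 → F) →ₗ[F] (Fin 7 → F) := Fintype.linearCombination F M
  have hφ : ∀ x, φ x = ∑ j, x j • M j := fun x => by simp [φ, Fintype.linearCombination_apply]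
  obtain ⟨g, hg⟩ := LinearMap.exists_leftInverse_of_injective φ (LinearMap.ker_eq_bot.mpr hli.fintypeLinearCombination_injective)
  have hg' : ∀ x, g (φ x) = x := fun x => by rw [← LinearMap.comp_apply, hg]; rfl
  refine ⟨φ v, by rw [hφ]; exact P.sum_mem fun j _ => P.smul_mem _ (hMP j), L ∘ₗ g, ?_, ?_, ?_⟩
  · simp [hg', h1]
  · rw [← lineR_coeff_hC (step4a H M hMP a) (by omega) 0, lineR_affR] at h2
    simpa [hφ] using h2
  · intro x hx
    rw [← hM, Submodule.mem_span_range_iff_exists_fun] at hx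
    obtain ⟨c, rfl⟩ := hx
    have := h3 c
    rw [affR_eval, affR_eval] at this
    rw [this, ← hφ, ← hφ]
    simp [hg']


theorem biv {F : Type} [Field F] {m n : ℕ} {f : MvPolynomial (Fin m) F} (hf : f.IsHomogeneous n)
    (w e x : Fin m → F) (k : ℕ) :
    ∃ G : Polynomial F, G.natDegree ≤ n - k ∧ (∀ s : F, (lineR (w + s • e) x f).coeff k = G.eval s) ∧
      (k ≤ n → G.coeff (n - k) = (lineR e x f).coeff k) := by
  classical
  set h := affR 0 ![w, e, x] f with hh
  have hhom : h.IsHomogeneous n := affR_homog _ hf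
  have hsum : ∀ d ∈ h.support, d 0 + d 1 + d 2 = n := by
    intro d hd
    have hw := hhom (mem_support_iff.mp hd)
    simpa [Finsupp.weight_apply, Finsupp.sum_fintype, Fin.sum_univ_three] using hw
  have hl : ∀ r s : F, lineR (r • w + s • e) x f = ∑ d ∈ h.support, Polynomial.C (coeff d h * r ^ d 0 * s ^ d 1) * Polynomial.X ^ d 2 := by
    intro r s
    have h1 := lineR_affR 0 ![w, e, x] f ![r, s, 0] ![0, 0, 1]
    have h2 : lineR (r • w + s • e) x f = lineR ![r, s, 0] ![0, 0, 1] h := by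
      rw [hh, h1]; simp [Fin.sum_univ_three]
    rw [h2, lineR, aeval_def, eval₂_eq']
    refine Finset.sum_congr rfl fun d _ => ?_
    simp [Fin.prod_univ_three, mul_assoc]
  refine ⟨∑ d ∈ h.support.filter (fun d => d 2 = k), Polynomial.C (coeff d h) * Polynomial.X ^ d 1, ?_, ?_, ?_⟩
  · refine Polynomial.natDegree_sum_le_of_forall_le _ _ fun d hd => ?_
    rw [Finset.mem_filter] at hd
    refine (Polynomial.natDegree_C_mul_X_pow_le _ _).trans ?_
    have := hsum d hd.1
    omega
  · intro s
    have := hl 1 s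
    rw [one_smul] at this
    rw [this, Polynomial.finset_sum_coeff, Polynomial.eval_finset_sum, Finset.sum_filter]
    refine Finset.sum_congr rfl fun d _ => ?_
    rw [Polynomial.coeff_C_mul_X_pow]
    simp [eq_comm]
  · intro hk
    have := hl 0 1
    rw [zero_smul, one_smul, zero_add] at this
    rw [this, Polynomial.finset_sum_coeff, Polynomial.finset_sum_coeff, Finset.sum_filter]
    refine Finset.sum_congr rfl fun d hd => ?_
    have h3 := hsum d hd
    rw [Polynomial.coeff_C_mul_X_pow, Polynomial.coeff_C_mul_X_pow]
    by_cases h2 : d 2 = k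
    · rw [if_pos h2, if_pos h2.symm]
      by_cases h0 : d 0 = 0
      · rw [if_pos (by omega), h0]; simp
      · rw [if_neg (by omega), zero_pow h0]; simp
    · rw [if_neg h2, if_neg (Ne.symm h2)]

/-- polar coefficient -/
noncomputable def DD {F : Type} [Field F] (q : ℕ) (f : MvPolynomial (Fin 7) F) (a x : Fin 7 → F) : F :=
  (lineR a x f).coeff q

theorem DD_lin {q : ℕ} {F : Type} [Field F] {f : MvPolynomial (Fin 7) F} (hf : f.IsHomogeneous (q+1))
    (a b x : Fin 7 → F) (s : F) : DD q f (a + s • b) x = DD q f a x + s * DD q f b x := by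
  obtain ⟨G, h1, h2, h3⟩ := biv hf a b x q
  rw [DD, h2, DD, DD, ← h3 (by omega)]
  have h4 := h2 0
  rw [zero_smul, add_zero] at h4
  rw [h4]
  have h5 : G.natDegree ≤ 1 := by omega
  rw [Polynomial.eq_X_add_C_of_natDegree_le_one h5]
  simp [show q + 1 - q = 1 by omega]
  ring

theorem lineR_scale {F : Type} [Field F] {σ : Type} (a x : σ → F) (c : F) (f : MvPolynomial σ F) (k : ℕ) :
    (lineR a (c • x) f).coeff k = (lineR a x f).coeff k * c ^ k := by
  have : lineR a (c • x) f = (lineR a x f).comp (Polynomial.C c * Polynomial.X) := by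
    rw [lineR, lineR, ← Polynomial.coe_compRingHom_apply]
    have : ((Polynomial.compRingHom (Polynomial.C c * Polynomial.X)).comp (aeval (fun i => Polynomial.C (a i) + Polynomial.C (x i) * Polynomial.X) : MvPolynomial σ F →ₐ[F] Polynomial F).toRingHom) = (aeval (fun i => Polynomial.C (a i) + Polynomial.C ((c • x) i) * Polynomial.X) : MvPolynomial σ F →ₐ[F] Polynomial F).toRingHom := by
      apply MvPolynomial.ringHom_ext
      · intro r; simp
      · intro i; simp; ring
    exact (DFunLike.congr_fun this f).symm
  rw [this, Polynomial.comp_C_mul_X_coeff]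

theorem poly_eq_of_eval {F : Type} [Field F] [Fintype F] {p r : Polynomial F} (hp : p.natDegree < Fintype.card F)
    (hr : r.natDegree < Fintype.card F) (h : ∀ x, p.eval x = r.eval x) : p = r := by
  rw [← sub_eq_zero]
  apply Polynomial.eq_zero_of_natDegree_lt_card_of_eval_eq_zero' _ Finset.univ
  · intro x _; rw [Polynomial.eval_sub, h, sub_self]
  · refine lt_of_le_of_lt (Polynomial.natDegree_sub_le _ _) ?_
    simpa using ⟨hp, hr⟩

theorem lineR_deg' {F : Type} [Field F] {σ : Type} {n : ℕ} {f : MvPolynomial σ F} (hf : f.IsHomogeneous n) (a x : σ → F) :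
    (lineR a x f).natDegree ≤ n := (lineR_deg a x f).trans hf.totalDegree_le

theorem F3 {q : ℕ} {F : Type} [Field F] [Fintype F] {f : MvPolynomial (Fin 7) F}
    {W P : Submodule F (Fin 7 → F)} (H : Hyp2 q f W P) (a : Fin 7 → F) (ha : a ∉ W) :
    ∃ x0 ∈ P, DD q f a x0 = 1 ∧ (∃ L : (Fin 7 → F) →ₗ[F] F, ∀ x ∈ P, DD q f a x = (L x) ^ q) ∧
    ∀ x ∈ P, ∀ k, (lineR a x f).coeff k = (lineR a x0 f).coeff k * (DD q f a x) ^ (q * k) := by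
  have hq1 := H.q1
  have hQ : ∀ x : F, x ^ (q * q) = x := by
    intro x
    have := FiniteField.pow_card x
    rwa [H.H.cF, sq] at this
  obtain ⟨x0, hx0, L, hL, hD, h⟩ := step5b H a ha
  have hco : ∀ x ∈ P, ∀ k, (lineR a x f).coeff k = (lineR a x0 f).coeff k * (L x) ^ k := by
    intro x hx k
    rw [← lineR_scale]
    have : lineR a x f = lineR a (L x • x0) f := by
      apply poly_eq_of_eval
      · have := lineR_deg' H.H.hf a x; omega
      · have := lineR_deg' H.H.hf a (L x • x0); omega
      · intro s
        rw [lineR_eval, lineR_eval, h _ (P.smul_mem s hx), map_smul, smul_eq_mul, mul_smul]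
    rw [this]
  set δ := (lineR a x0 f).coeff q with hδ
  -- c with c^q * δ = 1
  set c := (δ⁻¹) ^ q with hc
  have hcq : c ^ q = δ⁻¹ := by rw [hc, ← pow_mul, hQ]
  have hc0 : c ≠ 0 := pow_ne_zero _ (inv_ne_zero hD)
  have h1 : DD q f a (c • x0) = 1 := by
    rw [DD, lineR_scale, hcq, mul_inv_cancel₀ hD]
  have hDL : ∀ x ∈ P, DD q f a x = (c⁻¹ * L x) ^ q := by
    intro x hx
    rw [DD, hco x hx, mul_pow, inv_pow, hcq, inv_inv]
  refine ⟨c • x0, P.smul_mem _ hx0, h1, ⟨c⁻¹ • L, fun x hx => by simpa using hDL x hx⟩, ?_⟩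
  intro x hx k
  rw [hco x hx, lineR_scale, hDL x hx, pow_mul, ← pow_mul _ q q, hQ, mul_pow, inv_pow]
  field_simp

theorem F2 {q : ℕ} {F : Type} [Field F] [Fintype F] {f : MvPolynomial (Fin 7) F}
    {W P : Submodule F (Fin 7 → F)} (H : Hyp2 q f W P) (a x y : Fin 7 → F) (hx : x ∈ P) (hy : y ∈ P) :
    DD q f a (x + y) = DD q f a x + DD q f a y := by
  have hout : ∀ a, a ∉ W → DD q f a (x + y) = DD q f a x + DD q f a y := by
    intro a ha
    obtain ⟨_, -, -, ⟨L, hL⟩, -⟩ := F3 H a ha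
    rw [hL _ (P.add_mem hx hy), hL x hx, hL y hy, map_add, H.H.fr]
  by_cases ha : a ∈ W
  · obtain ⟨b, hb⟩ : ∃ b, b ∉ W := by
      by_contra! hcon
      have : W = ⊤ := by rw [eq_top_iff]; exact fun v _ => hcon v
      have h1 := H.H.rk
      rw [this, finrank_top, Module.finrank_fin_fun] at h1
      omega
    have hab : a + (1:F) • b ∉ W := fun h => hb (by simpa using W.sub_mem h ha)
    have h1 := hout _ hab
    have h2 := hout _ hb
    rw [DD_lin H.H.hf, DD_lin H.H.hf, DD_lin H.H.hf, h2] at h1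
    linear_combination h1
  · exact hout a ha

theorem DD_smul {q : ℕ} {F : Type} [Field F] (f : MvPolynomial (Fin 7) F) (a x : Fin 7 → F) (c : F) :
    DD q f a (c • x) = DD q f a x * c ^ q := lineR_scale _ _ _ _ _

theorem F4 {q : ℕ} {F : Type} [Field F] [Fintype F] {f : MvPolynomial (Fin 7) F}
    {W P : Submodule F (Fin 7 → F)} (H : Hyp2 q f W P) (M : Fin 3 → Fin 7 → F) (hM : Submodule.span F (Set.range M) = P) :
    (∀ a ∈ W, ∀ j, DD q f a (M j) = 0) ∧ (∀ c : Fin 3 → F, ∃ a, ∀ j, DD q f a (M j) = c j) := by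
  have hMP : ∀ j, M j ∈ P := fun j => hM ▸ Submodule.subset_span ⟨j, rfl⟩
  let δ : (Fin 7 → F) →ₗ[F] (Fin 3 → F) :=
    { toFun := fun a j => DD q f a (M j)
      map_add' := by
        intro a b; ext j
        have := DD_lin H.H.hf a b (M j) 1
        simpa using this
      map_smul' := by
        intro c a; ext j
        have := DD_lin H.H.hf 0 a (M j) c
        have h0 := DD_lin H.H.hf 0 0 (M j) 1
        simp at this h0
        simp [this, h0] }
  have hker : LinearMap.ker δ ≤ W := by
    intro a ha
    by_contra haW
    obtain ⟨x0, hx0, h1, ⟨L, hL⟩, -⟩ := F3 H a haW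
    have hz : ∀ j, L (M j) = 0 := by
      intro j
      have : DD q f a (M j) = 0 := congrFun (LinearMap.mem_ker.mp ha) j
      rw [hL _ (hMP j)] at this
      exact pow_eq_zero_iff (by have := H.H.q2; omega) |>.mp this
    rw [← hM, Submodule.mem_span_range_iff_exists_fun] at hx0
    obtain ⟨c, rfl⟩ := hx0
    rw [hL _ (P.sum_mem fun j _ => P.smul_mem _ (hMP j))] at h1
    have hq := H.H.q2
    have h0 : L (∑ j, c j • M j) = 0 := by simp [map_sum, hz]
    rw [h0, zero_pow (by omega)] at h1
    exact zero_ne_one h1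
  have hrn := LinearMap.finrank_range_add_finrank_ker δ
  rw [Module.finrank_fin_fun] at hrn
  have h1 : Module.finrank F (LinearMap.range δ) ≤ 3 := by
    have := Submodule.finrank_le (LinearMap.range δ)
    rwa [Module.finrank_fin_fun] at this
  have h2 := Submodule.finrank_mono hker
  rw [H.H.rk] at h2
  have hkW : LinearMap.ker δ = W := Submodule.eq_of_le_of_finrank_eq hker (by rw [H.H.rk]; omega)
  have hr : LinearMap.range δ = ⊤ := Submodule.eq_top_of_finrank_eq (by rw [Module.finrank_fin_fun]; omega)
  constructor
  · intro a ha j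
    rw [← hkW] at ha
    exact congrFun (LinearMap.mem_ker.mp ha) j
  · intro c
    obtain ⟨a, ha⟩ := LinearMap.range_eq_top.mp hr c
    exact ⟨a, fun j => congrFun ha j⟩


theorem Hyp2.hQ {q : ℕ} {F : Type} [Field F] [Fintype F] {f : MvPolynomial (Fin 7) F}
    {W P : Submodule F (Fin 7 → F)} (H : Hyp2 q f W P) (x : F) : x ^ (q * q) = x := by
  have := FiniteField.pow_card x
  rwa [H.H.cF, sq] at this

theorem ker_two {F V : Type} [Field F] [AddCommGroup V] [Module F V] (L : V →ₗ[F] F) (x0 : V) (h : L x0 = 1)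
    (hV : Module.finrank F V = 3) : ∃ k : Fin 2 → V, LinearIndependent F k ∧ ∀ j, L (k j) = 0 := by
  have : FiniteDimensional F V := Module.finite_of_finrank_pos (by omega)
  have hr : LinearMap.range L = ⊤ := by
    rw [LinearMap.range_eq_top]
    intro c
    exact ⟨c • x0, by simp [h]⟩
  have hk : Module.finrank F (LinearMap.ker L) = 2 := by
    have := LinearMap.finrank_range_add_finrank_ker L
    rw [hr, finrank_top, Module.finrank_self, hV] at this
    omega
  let b := Module.finBasisOfFinrankEq F (LinearMap.ker L) hk
  exact ⟨fun j => b j, b.linearIndependent.map' (LinearMap.ker L).subtype (by simp), fun j => (b j).2⟩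

theorem frame {q : ℕ} {F : Type} [Field F] [Fintype F] {f : MvPolynomial (Fin 7) F}
    {W P : Submodule F (Fin 7 → F)} (H : Hyp2 q f W P) (u : Fin 7 → F) (hu : u ∉ W) :
    ∃ M : Fin 3 → Fin 7 → F, LinearIndependent F M ∧ Submodule.span F (Set.range M) = P ∧
      DD q f u (M 0) = 1 ∧ DD q f u (M 1) = 0 ∧ DD q f u (M 2) = 0 := by
  have hq := H.H.q2
  obtain ⟨x0, hx0, h1, ⟨L, hL⟩, -⟩ := F3 H u hu
  have hL0 : L x0 = 1 := by
    rw [hL x0 hx0] at h1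
    rw [← H.hQ (L x0), pow_mul, h1, one_pow]
  obtain ⟨b, hbli, hb0⟩ := ker_two (L.domRestrict P) ⟨x0, hx0⟩ (by simpa using hL0) H.rk
  let k : Fin 2 → Fin 7 → F := fun j => (b j : Fin 7 → F)
  have hkP : ∀ j, k j ∈ P := fun j => (b j).2
  have hkL : ∀ j, L (k j) = 0 := fun j => by simpa using hb0 j
  have hkli : LinearIndependent F k := hbli.map' P.subtype (by simp)
  let M : Fin 3 → Fin 7 → F := ![x0, k 0, k 1]
  have hMP : ∀ j, M j ∈ P := by
    intro j; fin_cases j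
    exacts [hx0, hkP 0, hkP 1]
  have hli : LinearIndependent F M := by
    rw [Fintype.linearIndependent_iff]
    intro c hc
    simp only [M, Fin.sum_univ_three, Matrix.cons_val] at hc
    have h3 := congrArg L hc
    simp [hkL, hL0] at h3
    rw [h3, zero_smul, zero_add] at hc
    rw [Fintype.linearIndependent_iff] at hkli
    have h4 := hkli ![c 1, c 2] (by simpa [Fin.sum_univ_two] using hc)
    intro i
    fin_cases i
    · exact h3
    · exact h4 0
    · exact h4 1
  refine ⟨M, hli, ?_, h1, ?_, ?_⟩
  · apply Submodule.eq_of_le_of_finrank_eq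
    · rw [Submodule.span_le]; rintro _ ⟨j, rfl⟩; exact hMP j
    · rw [finrank_span_eq_card hli, H.rk]; simp
  · rw [hL _ (hMP 1), show L (M 1) = 0 from hkL 0, zero_pow (by omega)]
  · rw [hL _ (hMP 2), show L (M 2) = 0 from hkL 1, zero_pow (by omega)]

/-- the one-variable polynomial identity -/
theorem F5 {q : ℕ} {F : Type} [Field F] [Fintype F] {f : MvPolynomial (Fin 7) F}
    {W P : Submodule F (Fin 7 → F)} (H : Hyp2 q f W P) (u : Fin 7 → F)
    (M : Fin 3 → Fin 7 → F) (hM : Submodule.span F (Set.range M) = P)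
    (h0 : DD q f u (M 0) = 1) (h1 : DD q f u (M 1) = 0) :
    ∃ c : F, ∀ e ∈ W, ∀ x ∈ P, eval (u + e + x) f = eval (u + e) f + c * (DD q f u x) ^ q + DD q f u x ^ (q * q) := by
  have hq := H.H.q2
  have hq1 := H.q1
  have hMP : ∀ j, M j ∈ P := fun j => hM ▸ Submodule.subset_span ⟨j, rfl⟩
  obtain ⟨hW0, hsur⟩ := F4 H M hM
  obtain ⟨e2, he2⟩ := hsur ![0, 1, 0]
  have he20 : DD q f e2 (M 0) = 0 := by simpa using he2 0
  have he21 : DD q f e2 (M 1) = 1 := by simpa using he2 1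
  have hWx : ∀ e ∈ W, ∀ x ∈ P, DD q f e x = 0 := by
    intro e he x hx
    rw [← hM] at hx
    have : x ∈ P ∧ DD q f e x = 0 := by
      induction hx using Submodule.span_induction with
      | mem x h => obtain ⟨j, rfl⟩ := h; exact ⟨hMP j, hW0 e he j⟩
      | zero => exact ⟨P.zero_mem, by have := DD_smul (q := q) f e 0 0; simpa [zero_pow (show q ≠ 0 by omega)] using this⟩
      | add x y _ _ hx hy => exact ⟨P.add_mem hx.1 hy.1, by rw [F2 H e x y hx.1 hy.1, hx.2, hy.2, add_zero]⟩
      | smul c x _ hx => exact ⟨P.smul_mem _ hx.1, by rw [DD_smul, hx.2, zero_mul]⟩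
    exact this.2
  refine ⟨(lineR e2 (M 1) f).coeff 1, ?_⟩
  intro e he x hx
  set w := u + e with hw
  have hDw : ∀ x ∈ P, DD q f w x = DD q f u x := by
    intro x hx
    have := DD_lin H.H.hf u e x 1
    rw [one_smul, hWx e he x hx, mul_zero, add_zero] at this
    exact this
  have hgen : ∀ y, DD q f y (M 0) = 1 → ∀ x ∈ P, ∀ k,
      (lineR y x f).coeff k = (lineR y (M 0) f).coeff k * (DD q f y x) ^ (q * k) := by
    intro y hy x hx k
    have hyW : y ∉ W := fun h => by rw [hW0 y h 0] at hy; exact zero_ne_one hy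
    obtain ⟨x0, -, -, -, h3⟩ := F3 H y hyW
    have := h3 (M 0) (hMP 0) k
    rw [hy, one_pow, mul_one] at this
    rw [this, h3 x hx k]
  have hy0 : ∀ s : F, DD q f (w + s • e2) (M 0) = 1 := by
    intro s
    rw [DD_lin H.H.hf, hDw _ (hMP 0), h0, he20, mul_zero, add_zero]
  have hy1 : ∀ s : F, DD q f (w + s • e2) (M 1) = s := by
    intro s
    rw [DD_lin H.H.hf, hDw _ (hMP 1), h1, he21, mul_one, zero_add]
  have hcoef : ∀ k, 1 ≤ k → k ≤ q - 1 → ∃ G K : Polynomial F, G.natDegree ≤ q + 1 - k ∧ K.natDegree ≤ q + 1 - k ∧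
      K = G * Polynomial.X ^ (q * k) ∧ (lineR w (M 0) f).coeff k = G.coeff 0 ∧ K.coeff (q + 1 - k) = (lineR e2 (M 1) f).coeff k := by
    intro k hk1 hk2
    obtain ⟨G, hG1, hG2, -⟩ := biv H.H.hf w e2 (M 0) k
    obtain ⟨K, hK1, hK2, hK3⟩ := biv H.H.hf w e2 (M 1) k
    refine ⟨G, K, hG1, hK1, ?_, ?_, hK3 (by omega)⟩
    · apply poly_eq_of_eval
      · omega
      · refine lt_of_le_of_lt (Polynomial.natDegree_mul_le) ?_
        rw [Polynomial.natDegree_X_pow, H.H.cF]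
        obtain ⟨r, rfl⟩ : ∃ r, q = r + 3 := ⟨q - 3, by omega⟩
        have : k ≤ r + 2 := by omega
        have h5 : G.natDegree + k ≤ r + 3 + 1 := by omega
        nlinarith
      · intro s
        rw [← hK2, hgen _ (hy0 s) _ (hMP 1), hG2, hy1]
        simp
    · have := hG2 0
      rw [zero_smul, add_zero] at this
      rw [this, Polynomial.coeff_zero_eq_eval_zero]
  have hk : ∀ k, 2 ≤ k → k ≤ q - 1 → (lineR w (M 0) f).coeff k = 0 := by
    intro k hk1 hk2
    obtain ⟨G, K, hG, hK, hGK, hw0, -⟩ := hcoef k (by omega) hk2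
    rw [hw0]
    have : K.coeff (q * k) = G.coeff 0 := by
      rw [hGK]
      have := Polynomial.coeff_mul_X_pow G (q * k) 0
      simpa using this
    rw [← this]
    apply Polynomial.coeff_eq_zero_of_natDegree_lt
    have : q * 2 ≤ q * k := Nat.mul_le_mul_left _ hk1
    omega
  have hk1 : (lineR w (M 0) f).coeff 1 = (lineR e2 (M 1) f).coeff 1 := by
    obtain ⟨G, K, hG, hK, hGK, hw0, hK3⟩ := hcoef 1 le_rfl (by omega)
    rw [hw0, ← hK3, hGK]
    have := Polynomial.coeff_mul_X_pow G (q * 1) 0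
    simpa using this.symm
  -- expand
  have hexp : eval (w + x) f = ∑ k ∈ Finset.range (q + 2), (lineR w x f).coeff k := by
    have := lineR_eval w x f 1
    rw [one_smul] at this
    rw [← this, Polynomial.eval_eq_sum_range' (n := q + 2) (by have := lineR_deg' H.H.hf w x; omega)]
    simp
  have hw00 : DD q f w (M 0) = 1 := by rw [hDw _ (hMP 0), h0]
  have hx0 : (lineR w x f).coeff 0 = eval w f := by
    have := lineR_eval w x f 0
    rw [zero_smul, add_zero] at this
    rw [← this, Polynomial.coeff_zero_eq_eval_zero]
  have hxtop : (lineR w x f).coeff (q+1) = 0 := by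
    rw [lineR_coeff_top H.H.hf hq1]
    exact (H.mem x (H.le hx)).mpr hx
  rw [hexp, Finset.sum_range_succ, Finset.sum_range_succ, hxtop, add_zero,
    hgen w hw00 x hx q, show (lineR w (M 0) f).coeff q = 1 from hw00, one_mul, hDw x hx]
  congr 1
  obtain ⟨r, hr⟩ : ∃ r, q = r + 2 := ⟨q - 2, by omega⟩
  have : ∑ k ∈ Finset.range q, (lineR w x f).coeff k = ∑ k ∈ Finset.range 2, (lineR w x f).coeff k := by
    symm
    apply Finset.sum_subset
    · intro i; simp; omega
    · intro k hk2 hk3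
      simp at hk2 hk3
      rw [hgen w hw00 x hx k, hk k (by omega) (by omega), zero_mul]
  rw [this, Finset.sum_range_succ, Finset.sum_range_one, hx0, hgen w hw00 x hx 1, hk1, hDw x hx, mul_one]

theorem F6 {q : ℕ} {F : Type} [Field F] [Fintype F] {f : MvPolynomial (Fin 7) F}
    {W P : Submodule F (Fin 7 → F)} (H : Hyp2 q f W P) (u : Fin 7 → F)
    (M : Fin 3 → Fin 7 → F) (hM : Submodule.span F (Set.range M) = P)
    (h0 : DD q f u (M 0) = 1) (h1 : DD q f u (M 1) = 0) (h2 : DD q f u (M 2) = 0) :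
    ∃ c : F, ∀ e ∈ W, ∀ s t : F, ∀ y : Fin 3 → F, eval (s • u + t • e + ∑ j, y j • M j) f =
      s * y 0 ^ q + c * s ^ q * y 0 + eval (s • u + t • e) f := by
  have hq := H.H.q2
  have hq1 := H.q1
  have hMP : ∀ j, M j ∈ P := fun j => hM ▸ Submodule.subset_span ⟨j, rfl⟩
  have hyP : ∀ y : Fin 3 → F, ∑ j, y j • M j ∈ P := fun y => P.sum_mem fun j _ => P.smul_mem _ (hMP j)
  obtain ⟨c, hc⟩ := F5 H u M hM h0 h1
  have hD : ∀ y : Fin 3 → F, DD q f u (∑ j, y j • M j) = y 0 ^ q := by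
    intro y
    rw [Fin.sum_univ_three, F2 H _ _ _ (P.add_mem (P.smul_mem _ (hMP 0)) (P.smul_mem _ (hMP 1))) (P.smul_mem _ (hMP 2)),
      F2 H _ _ _ (P.smul_mem _ (hMP 0)) (P.smul_mem _ (hMP 1)), DD_smul, DD_smul, DD_smul, h0, h1, h2]
    ring
  refine ⟨c, ?_⟩
  intro e he s t y
  have hne : ∀ s : F, s ≠ 0 → eval (s • u + t • e + ∑ j, y j • M j) f =
      s * y 0 ^ q + c * s ^ q * y 0 + eval (s • u + t • e) f := by
    intro s hs
    have e1 : s • u + t • e + ∑ j, y j • M j = s • (u + (s⁻¹ * t) • e + ∑ j, (s⁻¹ * y j) • M j) := by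
      simp only [smul_add, smul_smul, Finset.smul_sum, ← mul_assoc, mul_inv_cancel₀ hs, one_mul]
    have e2 : s • u + t • e = s • (u + (s⁻¹ * t) • e) := by
      simp only [smul_add, smul_smul, ← mul_assoc, mul_inv_cancel₀ hs, one_mul]
    rw [e1, e2, hom_eval_smul H.H.hf, hom_eval_smul H.H.hf, hc _ (W.smul_mem _ he) _ (hyP fun j => s⁻¹ * y j), hD,
      ← pow_mul, H.hQ, ← pow_mul, pow_mul _ q (q * q), H.hQ, mul_pow, inv_pow, pow_succ]
    field_simp
    ring
  by_cases hs : s = 0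
  · subst hs
    have hp : lineR (t • e + ∑ j, y j • M j) u f - (Polynomial.C (y 0 ^ q) * Polynomial.X + Polynomial.C (c * y 0) * Polynomial.X ^ q + lineR (t • e) u f) = 0 := by
      apply poly_zero_of_eval_ne
      · intro s hs
        have := hne s hs
        simp only [Polynomial.eval_sub, Polynomial.eval_add, lineR_eval, Polynomial.eval_mul, Polynomial.eval_C, Polynomial.eval_X, Polynomial.eval_pow]
        rw [show t • e + ∑ j, y j • M j + s • u = s • u + t • e + ∑ j, y j • M j by abel, this, add_comm (t • e)]
        ring
      · have h5 : (lineR (t • e + ∑ j, y j • M j) u f - (Polynomial.C (y 0 ^ q) * Polynomial.X + Polynomial.C (c * y 0) * Polynomial.X ^ q + lineR (t • e) u f)).natDegree ≤ q + 1 := by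
          refine (Polynomial.natDegree_sub_le _ _).trans (max_le (lineR_deg' H.H.hf _ _) ?_)
          refine (Polynomial.natDegree_add_le _ _).trans (max_le ?_ (lineR_deg' H.H.hf _ _))
          refine (Polynomial.natDegree_add_le _ _).trans (max_le ?_ ?_)
          · have := Polynomial.natDegree_C_mul_X_pow_le (y 0 ^ q) 1
            rw [pow_one] at this
            omega
          · exact (Polynomial.natDegree_C_mul_X_pow_le _ _).trans (by omega)
        omega
    have := congrArg (Polynomial.eval 0) hp
    simp only [Polynomial.eval_sub, Polynomial.eval_add, lineR_eval, Polynomial.eval_mul, Polynomial.eval_C, Polynomial.eval_X, Polynomial.eval_pow, zero_smul, add_zero, Polynomial.eval_zero] at this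
    rw [zero_smul, zero_add]
    linear_combination this
  · exact hne s hs


theorem F7 {q : ℕ} {F : Type} [Field F] [Fintype F] {f : MvPolynomial (Fin 7) F}
    {W P : Submodule F (Fin 7 → F)} (H : Hyp2 q f W P) (u : Fin 7 → F) (hu : u ∉ W)
    (M : Fin 3 → Fin 7 → F) (hM : Submodule.span F (Set.range M) = P) (c : F)
    (hc : ∀ e ∈ W, ∀ s t : F, ∀ y : Fin 3 → F, eval (s • u + t • e + ∑ j, y j • M j) f =
      s * y 0 ^ q + c * s ^ q * y 0 + eval (s • u + t • e) f) :
    c * c ^ q = 1 ∧ ∀ e ∈ W, (eval (u + e) f) ^ q = c ^ q * eval (u + e) f := by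
  classical
  have hq := H.H.q2
  have hneg : ∀ x : F, (-x) ^ q = - x ^ q := by
    intro x
    have := H.H.fr x (-x)
    rw [add_neg_cancel, zero_pow (by omega)] at this
    linear_combination -this
  have hQ : ∀ x : F, (x ^ q) ^ q = x := fun x => by rw [← pow_mul, H.hQ]
  have hz : ∀ e ∈ W, ∀ y : Fin 3 → F, eval y (affR (u + e) M f) = y 0 ^ q + c * y 0 + eval (u + e) f := by
    intro e he y
    rw [affR_eval]
    have := hc e he 1 1 y
    simpa using this
  have hcc : c * c ^ q = 1 := by
    have h1 := step4c H M hM u hu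
    have h2 : ∃ y y' : Fin 3 → F, eval y (affR u M f) = 0 ∧ eval y' (affR u M f) = 0 ∧ y 0 ≠ y' 0 := by
      by_contra! hcon
      have : (Finset.univ.filter fun x : Fin 3 → F => eval x (affR u M f) = 0).card ≤ (Finset.univ : Finset (F × F)).card := by
        apply Finset.card_le_card_of_injOn (fun y => (y 1, y 2)) (fun _ _ => by simp)
        intro y hy y' hy' h
        simp only [Finset.coe_filter, Finset.mem_univ, true_and, Set.mem_setOf_eq] at hy hy'
        simp only [Prod.mk.injEq] at h
        ext i
        fin_cases i
        exacts [hcon y y' hy hy', h.1, h.2]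
      rw [h1, Finset.card_univ, Fintype.card_prod, H.H.cF] at this
      have h5 : q ^ 4 < q ^ 5 := Nat.pow_lt_pow_right (by omega) (by norm_num)
      have h6 : q ^ 2 * q ^ 2 = q ^ 4 := by ring
      omega
    obtain ⟨y, y', hy, hy', hne⟩ := h2
    have e1 := hz 0 W.zero_mem y
    have e2 := hz 0 W.zero_mem y'
    rw [add_zero] at e1 e2
    rw [hy] at e1
    rw [hy'] at e2
    set z := y 0 + - y' 0 with hzd
    have hz0 : z ≠ 0 := by
      intro h; apply hne; linear_combination h
    have e3 : z ^ q = -(c * z) := by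
      rw [hzd, H.H.fr, hneg]; linear_combination e2 - e1
    have e4 : z = c * c ^ q * z := by
      conv_lhs => rw [← hQ z, e3, hneg, mul_pow, e3]
      ring
    have := mul_right_cancel₀ hz0 (show (1:F) * z = c * c ^ q * z by rw [one_mul]; exact e4)
    exact this.symm
  refine ⟨hcc, ?_⟩
  intro e he
  have hue : u + e ∉ W := fun h => hu (by simpa using W.sub_mem h he)
  have h1 := step4c H M hM _ hue
  obtain ⟨y, hy⟩ := Finset.card_pos.mp (by rw [h1]; positivity)
  simp only [Finset.mem_filter, Finset.mem_univ, true_and] at hy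
  rw [hz e he] at hy
  have e1 : eval (u + e) f = -(y 0 ^ q + c * y 0) := by linear_combination hy
  rw [e1, hneg, H.H.fr, hQ, mul_pow]
  linear_combination y 0 * hcc

theorem F8a {q : ℕ} {F : Type} [Field F] [Fintype F] (hq : 2 < q) (cF : Fintype.card F = q ^ 2)
    (fr : ∀ x y : F, (x + y) ^ q = x ^ q + y ^ q) (l : Polynomial F) (hl : l.natDegree ≤ q + 1) (d : F)
    (h : ∀ t, (l.eval t) ^ q = d * l.eval t) :
    (∀ i, 2 ≤ i → i ≤ q - 1 → l.coeff i = 0) ∧ l.coeff q ^ q = d * l.coeff 1 ∧ l.coeff 1 ^ q = d * l.coeff q ∧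
      l.coeff 0 ^ q = d * l.coeff 0 ∧ l.coeff (q+1) ^ q = d * l.coeff (q+1) := by
  have hQ : ∀ x : F, (x ^ q) ^ q = x := fun x => by
    have := FiniteField.pow_card x
    rwa [cF, sq, pow_mul] at this
  have hev : ∀ t, l.eval t = (∑ i ∈ Finset.Ico 2 q, l.coeff i * t ^ i) + l.coeff 0 + l.coeff 1 * t + l.coeff q * t ^ q + l.coeff (q+1) * t ^ (q+1) := by
    intro t
    rw [Polynomial.eval_eq_sum_range' (n := q + 2) (by omega), Finset.sum_range_succ, Finset.sum_range_succ,
      ← Finset.sum_range_add_sum_Ico _ (show 2 ≤ q by omega), Finset.sum_range_succ, Finset.sum_range_one]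
    ring
  have hs : ∀ (s : Finset ℕ) (g : ℕ → F), (∑ i ∈ s, g i) ^ q = ∑ i ∈ s, g i ^ q := by
    intro s g
    classical
    induction s using Finset.induction_on with
    | empty => simp; omega
    | insert a s ha ih => rw [Finset.sum_insert ha, Finset.sum_insert ha, fr, ih]
  let R : Polynomial F := (∑ i ∈ Finset.Ico 2 q, Polynomial.C (l.coeff i ^ q) * Polynomial.X ^ (q * i)) + Polynomial.C (l.coeff 0 ^ q)
    + Polynomial.C (l.coeff 1 ^ q) * Polynomial.X ^ q + Polynomial.C (l.coeff q ^ q) * Polynomial.X ^ 1 + Polynomial.C (l.coeff (q+1) ^ q) * Polynomial.X ^ (q+1)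
  have hR : R = Polynomial.C d * l := by
    apply poly_eq_of_eval
    · have : R.natDegree ≤ q * q - 1 := by
        have h1 : q + 2 ≤ q * q := by nlinarith
        refine (Polynomial.natDegree_add_le _ _).trans (max_le ?_ ((Polynomial.natDegree_C_mul_X_pow_le _ _).trans (by omega)))
        refine (Polynomial.natDegree_add_le _ _).trans (max_le ?_ ((Polynomial.natDegree_C_mul_X_pow_le _ _).trans (by omega)))
        refine (Polynomial.natDegree_add_le _ _).trans (max_le ?_ ((Polynomial.natDegree_C_mul_X_pow_le _ _).trans (by omega)))
        refine (Polynomial.natDegree_add_le _ _).trans (max_le ?_ (by simp))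
        refine Polynomial.natDegree_sum_le_of_forall_le _ _ fun i hi => ?_
        refine (Polynomial.natDegree_C_mul_X_pow_le _ _).trans ?_
        simp at hi
        have : q * (i + 1) ≤ q * q := Nat.mul_le_mul_left _ (by omega)
        rw [mul_add] at this
        omega
      rw [cF, sq]
      have : 0 < q * q := by positivity
      omega
    · refine lt_of_le_of_lt (Polynomial.natDegree_C_mul_le _ _) ?_
      rw [cF]; nlinarith
    · intro t
      rw [Polynomial.eval_mul, Polynomial.eval_C, ← h, hev]
      simp only [R, Polynomial.eval_add, Polynomial.eval_finset_sum, Polynomial.eval_mul, Polynomial.eval_C, Polynomial.eval_pow, Polynomial.eval_X]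
      simp only [fr, hs, mul_pow]
      rw [pow_one, hQ, pow_succ t q, mul_pow, hQ]
      simp only [pow_mul, ← pow_mul, mul_comm q]
      ring
  have hco : ∀ n, d * l.coeff n = (∑ i ∈ Finset.Ico 2 q, if n = q * i then l.coeff i ^ q else 0) + (if n = 0 then l.coeff 0 ^ q else 0)
     + (if n = q then l.coeff 1 ^ q else 0) + (if n = 1 then l.coeff q ^ q else 0) + (if n = q + 1 then l.coeff (q+1) ^ q else 0) := by
    intro n
    rw [← Polynomial.coeff_C_mul, ← hR]
    simp only [R, Polynomial.coeff_add, Polynomial.finset_sum_coeff, Polynomial.coeff_C_mul_X_pow, Polynomial.coeff_C]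
  have hsz : ∀ n, n ≤ q + 1 → (∑ i ∈ Finset.Ico 2 q, if n = q * i then l.coeff i ^ q else 0) = 0 := by
    intro n hn
    apply Finset.sum_eq_zero
    intro i hi
    simp at hi
    have : q * 2 ≤ q * i := Nat.mul_le_mul_left _ hi.1
    rw [if_neg (by omega)]
  refine ⟨?_, ?_, ?_, ?_, ?_⟩
  · intro i hi1 hi2
    have h2 : q * 2 ≤ q * i := Nat.mul_le_mul_left _ hi1
    have := hco (q * i)
    rw [Polynomial.coeff_eq_zero_of_natDegree_lt (by omega), if_neg (by omega), if_neg (by omega), if_neg (by omega), if_neg (by omega),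
      Finset.sum_eq_single i] at this
    · simp at this
      exact pow_eq_zero_iff (by omega) |>.mp this.symm
    · intro j _ hj
      rw [if_neg]
      intro h
      exact hj (Nat.eq_of_mul_eq_mul_left (by omega) h).symm
    · intro h; simp at h; omega
  · have := hco 1
    rw [hsz 1 (by omega), if_neg (by omega), if_neg (by omega), if_pos rfl, if_neg (by omega)] at this
    rw [this]; ring
  · have := hco q
    rw [hsz q (by omega), if_neg (by omega), if_pos rfl, if_neg (by omega), if_neg (by omega)] at this
    rw [this]; ring
  · have := hco 0
    rw [hsz 0 (by omega), if_pos rfl, if_neg (by omega), if_neg (by omega), if_neg (by omega)] at this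
    rw [this]; ring
  · have := hco (q+1)
    rw [hsz (q+1) (by omega), if_neg (by omega), if_neg (by omega), if_neg (by omega), if_pos rfl] at this
    rw [this]; ring

theorem F8 {q : ℕ} {F : Type} [Field F] [Fintype F] {f : MvPolynomial (Fin 7) F}
    {W P : Submodule F (Fin 7 → F)} (H : Hyp2 q f W P) (u e : Fin 7 → F) (he : e ∈ W) (d : F)
    (h : ∀ e ∈ W, (eval (u + e) f) ^ q = d * eval (u + e) f) :
    ∃ g0 g1 gq : F, (∀ s t : F, eval (s • u + t • e) f = g0 * s ^ (q+1) + g1 * (t * s ^ q) + gq * (t ^ q * s) + eval e f * t ^ (q+1)) ∧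
      gq ^ q = d * g1 ∧ g1 ^ q = d * gq ∧ g0 ^ q = d * g0 ∧ (eval e f) ^ q = d * eval e f := by
  have hq := H.H.q2
  have hq1 := H.q1
  set l := lineR u e f with hl
  have hld : l.natDegree ≤ q + 1 := lineR_deg' H.H.hf u e
  have hle : ∀ t, l.eval t = eval (u + t • e) f := fun t => lineR_eval _ _ _ _
  obtain ⟨h1, h2, h3, h4, h5⟩ := F8a hq H.H.cF H.H.fr l hld d (fun t => by rw [hle]; exact h _ (W.smul_mem t he))
  have htop : l.coeff (q+1) = eval e f := lineR_coeff_top H.H.hf hq1 u e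
  rw [htop] at h5
  refine ⟨l.coeff 0, l.coeff 1, l.coeff q, ?_, h2, h3, h4, h5⟩
  have hev : ∀ t, eval (u + t • e) f = l.coeff 0 + l.coeff 1 * t + l.coeff q * t ^ q + eval e f * t ^ (q+1) := by
    intro t
    rw [← hle, Polynomial.eval_eq_sum_range' (n := q + 2) (by omega), Finset.sum_range_succ, Finset.sum_range_succ,
      ← Finset.sum_range_add_sum_Ico _ (show 2 ≤ q by omega), Finset.sum_range_succ, Finset.sum_range_one, htop,
      Finset.sum_eq_zero (s := Finset.Ico 2 q)]
    · ring
    · intro i hi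
      simp at hi
      rw [h1 i hi.1 (by omega), zero_mul]
  intro s t
  by_cases hs : s = 0
  · subst hs
    rw [zero_smul, zero_add, hom_eval_smul H.H.hf, zero_pow (by omega), zero_pow (by omega)]
    ring
  · have e2 : s • u + t • e = s • (u + (s⁻¹ * t) • e) := by
      simp only [smul_add, smul_smul, ← mul_assoc, mul_inv_cancel₀ hs, one_mul]
    rw [e2, hom_eval_smul H.H.hf, hev, mul_pow, mul_pow, pow_succ s, pow_succ s⁻¹, pow_succ t, inv_pow]
    field_simp


theorem core {q : ℕ} {F : Type} [Field F] [Fintype F] {f : MvPolynomial (Fin 7) F}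
    {W P : Submodule F (Fin 7 → F)} (H : Hyp2 q f W P) (U : Submodule F (Fin 7 → F)) (hU : Module.finrank F U = 5)
    (hWU : W ≤ U) : ∃ η : (Fin 7 → F) → (Fin 7 → F) → F, IsHermitianForm q η ∧ HasRadicalDimOn η U 2 ∧
      ∀ v ∈ U, (η v v = 0 ↔ eval v f = 0) := by
  have hq := H.H.q2
  obtain ⟨u, huU, hu⟩ : ∃ u ∈ U, u ∉ W := by
    by_contra! hcon
    have := Submodule.finrank_mono (show U ≤ W from hcon)
    rw [hU, H.H.rk] at this
    omega
  obtain ⟨e, he, heP⟩ : ∃ e ∈ W, e ∉ P := by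
    by_contra! hcon
    have := Submodule.finrank_mono (show W ≤ P from hcon)
    rw [H.rk, H.H.rk] at this
    omega
  obtain ⟨M, hli, hM, hM0, hM1, hM2⟩ := frame H u hu
  have hMP : ∀ j, M j ∈ P := fun j => hM ▸ Submodule.subset_span ⟨j, rfl⟩
  obtain ⟨c, hc⟩ := F6 H u M hM hM0 hM1 hM2
  obtain ⟨hcc, hl⟩ := F7 H u hu M hM c hc
  obtain ⟨g0, g1, gq, hg, r1, r2, r3, r4⟩ := F8 H u e he (c ^ q) hl
  set γ := eval e f with hγ
  have hγ0 : γ ≠ 0 := fun h => heP ((H.mem e he).mp h)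
  have hQ : ∀ x : F, (x ^ q) ^ q = x := fun x => by rw [← pow_mul, H.hQ]
  have hc0 : c ≠ 0 := by rintro rfl; simp at hcc
  -- the frame
  let B : Fin 5 → Fin 7 → F := ![u, e, M 0, M 1, M 2]
  have hB : ∀ y : Fin 5 → F, ∑ i, y i • B i = y 0 • u + y 1 • e + ∑ j, (![y 2, y 3, y 4] : Fin 3 → F) j • M j := by
    intro y
    simp [B, Fin.sum_univ_five, Fin.sum_univ_three, add_assoc]
  have hBU : ∀ i, B i ∈ U := by
    intro i
    fin_cases i
    exacts [huU, hWU he, hWU (H.le (hMP 0)), hWU (H.le (hMP 1)), hWU (H.le (hMP 2))]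
  have hBli : LinearIndependent F B := by
    rw [Fintype.linearIndependent_iff]
    intro y hy
    rw [hB] at hy
    have hxP : ∑ j, (![y 2, y 3, y 4] : Fin 3 → F) j • M j ∈ P := P.sum_mem fun j _ => P.smul_mem _ (hMP j)
    have h0 : y 0 = 0 := by
      by_contra hne
      apply hu
      have : u = (y 0)⁻¹ • (-(y 1 • e + ∑ j, (![y 2, y 3, y 4] : Fin 3 → F) j • M j)) := by
        rw [eq_inv_smul_iff₀ hne, eq_neg_iff_add_eq_zero, ← add_assoc]; exact hy
      rw [this]
      exact W.smul_mem _ (W.neg_mem (W.add_mem (W.smul_mem _ he) (H.le hxP)))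
    rw [h0, zero_smul, zero_add] at hy
    have h1 : y 1 = 0 := by
      by_contra hne
      apply heP
      have : e = (y 1)⁻¹ • (-(∑ j, (![y 2, y 3, y 4] : Fin 3 → F) j • M j)) := by
        rw [eq_inv_smul_iff₀ hne, eq_neg_iff_add_eq_zero]; exact hy
      rw [this]
      exact P.smul_mem _ (P.neg_mem hxP)
    rw [h1, zero_smul, zero_add] at hy
    have h2 := (Fintype.linearIndependent_iff.mp hli) _ hy
    intro i
    fin_cases i
    exacts [h0, h1, h2 0, h2 1, h2 2]
  have hBspan : Submodule.span F (Set.range B) = U := by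
    apply Submodule.eq_of_le_of_finrank_eq
    · rw [Submodule.span_le]; rintro _ ⟨j, rfl⟩; exact hBU j
    · rw [finrank_span_eq_card hBli, hU]; simp
  let φ : (Fin 5 → F) →ₗ[F] (Fin 7 → F) := Fintype.linearCombination F B
  have hφ : ∀ x, φ x = ∑ j, x j • B j := fun x => by simp [φ, Fintype.linearCombination_apply]
  obtain ⟨g, hg'⟩ := LinearMap.exists_leftInverse_of_injective φ (LinearMap.ker_eq_bot.mpr hBli.fintypeLinearCombination_injective)
  have hgφ : ∀ x, g (φ x) = x := fun x => by rw [← LinearMap.comp_apply, hg']; rfl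
  have hmem : ∀ v ∈ U, v = φ (g v) := by
    intro v hv
    rw [← hBspan, Submodule.mem_span_range_iff_exists_fun] at hv
    obtain ⟨y, rfl⟩ := hv
    rw [← hφ, hgφ]
  have hfv : ∀ v ∈ U, eval v f = g v 0 * g v 2 ^ q + c * g v 0 ^ q * g v 2 + (g0 * g v 0 ^ (q+1) + g1 * (g v 1 * g v 0 ^ q) + gq * (g v 1 ^ q * g v 0) + γ * g v 1 ^ (q+1)) := by
    intro v hv
    conv_lhs => rw [hmem v hv, hφ, hB, hc e he, hg]
    simp
  have hgB : ∀ i, g (B i) = Pi.single i 1 := by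
    intro i
    have : B i = φ (Pi.single i 1) := by rw [hφ]; simp [Pi.single_apply]
    rw [this, hgφ]
  have hγq : γ ^ q ≠ 0 := pow_ne_zero _ hγ0
  have hiq : (γ⁻¹) ^ q = c * γ⁻¹ := by
    rw [inv_pow, r4, mul_inv, ← eq_inv_of_mul_eq_one_left hcc]
  let η : (Fin 7 → F) → (Fin 7 → F) → F := fun v w =>
    γ⁻¹ * (γ * g v 1 * g w 1 ^ q + g v 0 * g w 2 ^ q + c * g v 2 * g w 0 ^ q + gq * g v 0 * g w 1 ^ q + g1 * g v 1 * g w 0 ^ q + g0 * g v 0 * g w 0 ^ q)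
  refine ⟨η, ⟨?_, ?_, ?_, ?_⟩, ?_, ?_⟩
  · intro a b w
    simp only [η, map_add, Pi.add_apply]; ring
  · intro a b w
    simp only [η, map_add, Pi.add_apply, H.H.fr]; ring
  · intro a v w
    simp only [η, map_smul, Pi.smul_apply, smul_eq_mul]; ring
  · intro v w
    simp only [η, mul_pow, H.H.fr, hQ, hiq, r1, r2, r3, r4]
    linear_combination (-(γ⁻¹) * (γ * g w 1 * g v 1 ^ q + g w 0 * g v 2 ^ q + gq * g w 0 * g v 1 ^ q + g1 * g w 1 * g v 0 ^ q + g0 * g w 0 * g v 0 ^ q)) * hcc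
  · have hli2 : LinearIndependent F ![M 1, M 2] := by
      have := hli.comp ![1, 2] (by decide)
      convert this using 1
      ext i; fin_cases i <;> rfl
    refine ⟨Submodule.span F (Set.range ![M 1, M 2]), ?_, ?_, ?_⟩
    · rw [Submodule.span_le]
      rintro _ ⟨j, rfl⟩
      fin_cases j
      exacts [hBU 3, hBU 4]
    · rw [finrank_span_eq_card hli2]; simp
    · intro v hv
      constructor
      · intro hvR w _
        rw [Submodule.mem_span_range_iff_exists_fun] at hvR
        obtain ⟨y, rfl⟩ := hvR
        have h3 : ∑ i, y i • (![M 1, M 2] : Fin 2 → Fin 7 → F) i = y 0 • B 3 + y 1 • B 4 := by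
          simp [B]
        rw [h3]
        simp [η, hgB]
      · intro hall
        have e1 := hall _ (hBU 2)
        have e2 := hall _ (hBU 1)
        have e3 := hall _ (hBU 0)
        have hq0 : q ≠ 0 := by omega
        simp [η, hgB, hq0, hγ0] at e1
        simp [η, hgB, hq0, hγ0, e1] at e2
        simp [η, hgB, hq0, hγ0, e1, e2, hc0] at e3
        have h4 := hmem v hv
        rw [hφ, hB, e1, e2, e3] at h4
        rw [h4, Submodule.mem_span_range_iff_exists_fun]
        exact ⟨![g v 3, g v 4], by simp [Fin.sum_univ_three]⟩
  · intro v hv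
    rw [hfv v hv]
    simp only [η, mul_eq_zero, inv_eq_zero, hγ0, false_or]
    rw [← sub_eq_zero (b := (0:F)), sub_zero]
    have : ∀ a b : F, a = b → (a = 0 ↔ b = 0) := fun a b h => by rw [h]
    apply this
    ring

theorem cone_count {q : ℕ} {F : Type} [Field F] [Fintype F] {f : MvPolynomial (Fin 7) F}
    {W P : Submodule F (Fin 7 → F)} (H : Hyp2 q f W P) (U : Submodule F (Fin 7 → F)) (hU : Module.finrank F U = 5)
    (hWU : W ≤ U) : (hypersurfacePts f ∩ projPts U).ncard = q ^ 7 + q ^ 4 + q ^ 2 + 1 := by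
  classical
  have hq := H.H.q2
  obtain ⟨M, hli, hM⟩ := step5 H
  have hMP : ∀ j, M j ∈ P := fun j => hM ▸ Submodule.subset_span ⟨j, rfl⟩
  have h1 := dbl U W hWU (fun v => eval v f = 0) (fun x : Fin 3 → F => ∑ j, x j • M j) (fun x => W.sum_mem fun j _ => W.smul_mem _ (H.le (hMP j)))
  rw [Finset.sum_congr rfl (g := fun _ => q ^ 5) (fun a ha => by
    have := step4c H M hM a (by simp at ha; exact ha.2)
    simpa only [affR_eval] using this), Finset.sum_const, smul_eq_mul] at h1
  have h2 := card_compl U W hWU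
  have h3 := count_proj (Nat.succ_ne_zero q) H.H.hf U
  have h4 : (Finset.univ.filter fun v => v ∈ U ∧ eval v f = 0).card = q ^ 6 +
      (Finset.univ.filter fun a => (a ∈ U ∧ a ∉ W) ∧ eval a f = 0).card := by
    rw [← H.H.hZ3]
    have : {v | v ∈ W ∧ eval v f = 0}.ncard = (Finset.univ.filter fun a => a ∈ W ∧ eval a f = 0).card := by
      rw [← Set.ncard_coe_finset]; congr 1; ext; simp
    rw [this, ← Finset.card_union_of_disjoint]
    · congr 1
      ext v
      simp only [Finset.mem_union, Finset.mem_filter, Finset.mem_univ, true_and]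
      constructor
      · intro h; tauto
      · rintro (h | h)
        exacts [⟨hWU h.1, h.2⟩, ⟨h.1.1, h.2⟩]
    · rw [Finset.disjoint_filter]; tauto
  rw [h3] at h4
  simp only [hU, H.H.rk, H.H.cF, Fintype.card_pi, Finset.prod_const, Finset.card_univ, Fintype.card_fin] at h1 h2 h4
  generalize (Finset.univ.filter fun a => (a ∈ U ∧ a ∉ W) ∧ eval a f = 0).card = N at *
  generalize (Finset.univ.filter fun a => (a ∈ U ∧ a ∉ W)).card = K at *
  generalize (hypersurfacePts f ∩ projPts U).ncard = X at *
  have h5 : K = q * N := by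
    have : q ^ 5 * K = q ^ 5 * (q * N) := by
      calc _ = K * q ^ 5 := by ring
        _ = _ := h1
        _ = _ := by ring
    exact Nat.eq_of_mul_eq_mul_left (by positivity) this
  have h6 : N + q ^ 7 = q ^ 9 := by
    have : q * (N + q ^ 7) = q * q ^ 9 := by
      rw [mul_add, ← h5]
      calc _ = K + (q^2)^4 := by ring
        _ = _ := h2
        _ = _ := by ring
    exact Nat.eq_of_mul_eq_mul_left (by omega) this
  have hq2pos : 0 < q ^ 2 := pow_pos (by omega) 2
  obtain ⟨r, hr⟩ : ∃ r, q ^ 2 = r + 1 := ⟨q ^ 2 - 1, by omega⟩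
  have hr0 : 0 < r := by nlinarith
  rw [hr, Nat.add_sub_cancel] at h4
  have : r * X = r * (q ^ 7 + q ^ 4 + q ^ 2 + 1) := by
    zify at *
    have e : (r : ℤ) = q ^ 2 - 1 := by linear_combination -hr
    rw [e] at h4 ⊢
    linear_combination h4 + h6
  exact Nat.eq_of_mul_eq_mul_left hr0 this

theorem mkHyp (q : ℕ) (hq : ∃ p k : ℕ, p.Prime ∧ 0 < k ∧ q = p ^ k) (hq2 : 2 < q)
    (F : Type) [Field F] [Fintype F] (hcardF : Fintype.card F = q ^ 2)
    (f : MvPolynomial (Fin 7) F) (hfdeg : f.IsHomogeneous (q + 1))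
    (hnosolid : ¬ ∃ W : Submodule F (Fin 7 → F), Module.finrank F W = 4 ∧ projPts W ⊆ hypersurfacePts f)
    (hcardS : (hypersurfacePts f).ncard = q ^ 11 + q ^ 9 + q ^ 7 + q ^ 4 + q ^ 2 + 1)
    (W₃ : Submodule F (Fin 7 → F)) (hW₃ : Module.finrank F W₃ = 4)
    (hint : (hypersurfacePts f ∩ projPts W₃).ncard = q ^ 4 + q ^ 2 + 1) : Hyp q f W₃ := by
  classical
  obtain ⟨p, k, hp, hk, rfl⟩ := hq
  have : Fact p.Prime := ⟨hp⟩
  have hchar : CharP F p := by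
    obtain ⟨r, hr⟩ := CharP.exists F
    obtain ⟨n, hrp, hn⟩ := FiniteField.card F r
    rw [hcardF, ← pow_mul] at hn
    have : p = r := by
      have h1 : p ∣ r ^ (n : ℕ) := by rw [← hn]; exact dvd_pow_self p (by positivity)
      exact (Nat.prime_dvd_prime_iff_eq hp hrp).mp (hp.dvd_of_dvd_pow h1)
    rw [this]; exact hr
  have hpos : 0 < p ^ k := by omega
  generalize hqq : p ^ k = q at *
  have hq2pos : 0 < q ^ 2 := pow_pos (by omega) 2
  obtain ⟨r, hr⟩ : ∃ r, q ^ 2 = r + 1 := ⟨q ^ 2 - 1, by omega⟩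
  have h3 := count_proj (Nat.succ_ne_zero q) hfdeg W₃
  have h7 := count_proj (Nat.succ_ne_zero q) hfdeg ⊤
  have htop : projPts (⊤ : Submodule F (Fin 7 → F)) = Set.univ := by
    ext; simp [projPts]
  rw [htop, Set.inter_univ, hcardS, hcardF, hr, Nat.add_sub_cancel] at h7
  rw [hint, hcardF, hr, Nat.add_sub_cancel] at h3
  have hA : {v | v ∈ W₃ ∧ eval v f = 0}.ncard = (Finset.univ.filter fun a => a ∈ W₃ ∧ eval a f = 0).card := by
    rw [← Set.ncard_coe_finset]; congr 1; ext; simp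
  have hB : {v | v ∉ W₃ ∧ eval v f = 0}.ncard = (Finset.univ.filter fun a => a ∉ W₃ ∧ eval a f = 0).card := by
    rw [← Set.ncard_coe_finset]; congr 1; ext; simp
  have hC : (Finset.univ.filter fun a => a ∈ (⊤ : Submodule F (Fin 7 → F)) ∧ eval a f = 0).card =
     (Finset.univ.filter fun a => a ∈ W₃ ∧ eval a f = 0).card + (Finset.univ.filter fun a => a ∉ W₃ ∧ eval a f = 0).card := by
    rw [← Finset.card_union_of_disjoint]
    · congr 1
      ext v
      simp only [Finset.mem_union, Finset.mem_filter, Finset.mem_univ, true_and, Submodule.mem_top]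
      tauto
    · rw [Finset.disjoint_filter]; tauto
  refine ⟨hq2, hcardF, ?_, hfdeg, hW₃, ?_, ?_, ?_, ?_⟩
  · rw [← hqq]; push_cast; rw [CharP.cast_eq_zero F p, zero_pow (by omega)]
  · rw [hA, h3]
    zify at *
    have e : (r : ℤ) = q ^ 2 - 1 := by linear_combination -hr
    rw [e]; ring
  · rw [hB]
    rw [h7, h3] at hC
    generalize (Finset.univ.filter fun a => a ∉ W₃ ∧ eval a f = 0).card = N at *
    have hC' := congrArg (Nat.cast (R := ℤ)) hC
    push_cast at hC'
    zify
    have hr' : (q:ℤ) ^ 2 = r + 1 := by exact_mod_cast hr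
    have e : (r : ℤ) = q ^ 2 - 1 := by linear_combination -hr'
    rw [e] at hC'
    linear_combination -hC'
  · intro U hU
    by_contra! hcon
    apply hnosolid
    refine ⟨U, hU, ?_⟩
    intro Q hQ
    simp only [projPts, Set.mem_setOf_eq, Projectivization.submodule_eq, Submodule.span_singleton_le_iff_mem] at hQ
    exact hcon _ hQ
  · intro x y
    rw [← hqq]
    exact add_pow_char_pow x y p k

/-- Under the hypotheses of the main theorem, every `4`-space `Σ₄` through the special
solid `Σ₃` meets `S` in a Hermitian cone with vertex a line and base a non-singular
Hermitian curve; in particular `|S ∩ Σ₄| = q⁷ + q⁴ + q² + 1`. -/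
theorem stmt_10 (q : ℕ) (hq : ∃ p k : ℕ, p.Prime ∧ 0 < k ∧ q = p ^ k) (hq2 : 2 < q)
    (F : Type) [Field F] [Fintype F] (hcardF : Fintype.card F = q ^ 2)
    (f : MvPolynomial (Fin 7) F) (hf0 : f ≠ 0) (hfdeg : f.IsHomogeneous (q + 1))
    (S : Set (Projectivization F (Fin 7 → F))) (hS : S = hypersurfacePts f)
    (hnosolid : ¬ ∃ W : Submodule F (Fin 7 → F), Module.finrank F W = 4 ∧ projPts W ⊆ S)
    (hcardS : S.ncard = q ^ 11 + q ^ 9 + q ^ 7 + q ^ 4 + q ^ 2 + 1)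
    (W₃ : Submodule F (Fin 7 → F)) (hW₃ : Module.finrank F W₃ = 4)
    (hint : (S ∩ projPts W₃).ncard = q ^ 4 + q ^ 2 + 1) :
    ∀ W₄ : Submodule F (Fin 7 → F), Module.finrank F W₄ = 5 → W₃ ≤ W₄ →
      IsHermitianConeOn q W₄ 2 (S ∩ projPts W₄) ∧
      (S ∩ projPts W₄).ncard = q ^ 7 + q ^ 4 + q ^ 2 + 1 := by
  subst hS
  have H := mkHyp q hq hq2 F hcardF f hfdeg hnosolid hcardS W₃ hW₃ hint
  obtain ⟨P, hP1, hP2, hP3⟩ := step3 H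
  have H2 : Hyp2 q f W₃ P := ⟨H, hP1, hP2, hP3⟩
  intro W₄ h4 hle
  refine ⟨?_, cone_count H2 W₄ h4 hle⟩
  obtain ⟨η, h1, h2, h3⟩ := core H2 W₄ h4 hle
  refine ⟨η, h1, h2, ?_⟩
  ext Q
  simp only [hypersurfacePts, projPts, Set.mem_inter_iff, Set.mem_setOf_eq]
  constructor
  · rintro ⟨ha, hb⟩
    exact ⟨hb, (h3 _ (by rwa [Projectivization.submodule_eq, Submodule.span_singleton_le_iff_mem] at hb)).mpr ha⟩
  · rintro ⟨hb, ha⟩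
    exact ⟨(h3 _ (by rwa [Projectivization.submodule_eq, Submodule.span_singleton_le_iff_mem] at hb)).mp ha, hb⟩
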